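/- arXiv:1505.00543 — 2 statements merged into one kernel-verified Lean document; each statement's English description precedes it below -/
import Mathlib

section
/- (Theorem "stayinggraphicalthm", graphical case: graphs staying graphical keep bounded gradient and controlled height on shrinking balls.) Let n ≥ 1. For every L ≥ 1 there exists Λ > 1 such that the following holds. Let ρ, Γ, τ > 0, δ ∈ (0,1], t₀ ∈ ℝ, â ∈ ℝⁿ, and let f : [t₀,t₀+τ) × Bⁿ(â,ρ) → ℝ be a graphical mean curvature flow with |f(t,x)| < Γ for all (t,x). Suppose sup_{Bⁿ(â,ρ)} |f(t₀,·)| ≤ Γ − 2δρ and sup_{Bⁿ(â,ρ)} |Df(t₀,·)| ≤ L. Then for every t ∈ (t₀,t₀+τ) with Λ√(t−t₀) < δρ and every x ∈ Bⁿ(â, ρ − Λ√(t−t₀)) one has |f(t,x)| ≤ sup_{Bⁿ(â,ρ)} |f(t₀,·)| + Λ√(t−t₀) and |Df(t,x)| ≤ 4L. -/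
open Metric Set MeasureTheory

/-- Partial derivative `∂ᵢ g (x)`. -/
noncomputable def pd {n : ℕ} (g : EuclideanSpace ℝ (Fin n) → ℝ) (x : EuclideanSpace ℝ (Fin n))
    (i : Fin n) : ℝ :=
  fderiv ℝ g x (EuclideanSpace.single i 1)

/-- Second partial derivative `∂ᵢ∂ⱼ g (x)`. -/
noncomputable def pd2 {n : ℕ} (g : EuclideanSpace ℝ (Fin n) → ℝ) (x : EuclideanSpace ℝ (Fin n))
    (i j : Fin n) : ℝ :=
  fderiv ℝ (fun y => pd g y j) x (EuclideanSpace.single i 1)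

/-- Squared Euclidean norm `|Dg(x)|²` of the spatial gradient. -/
noncomputable def gradNormSq {n : ℕ} (g : EuclideanSpace ℝ (Fin n) → ℝ)
    (x : EuclideanSpace ℝ (Fin n)) : ℝ :=
  ∑ i, (pd g x i) ^ 2

/-- Euclidean norm `|Dg(x)|` of the spatial gradient. -/
noncomputable def gradNorm {n : ℕ} (g : EuclideanSpace ℝ (Fin n) → ℝ)
    (x : EuclideanSpace ℝ (Fin n)) : ℝ :=
  Real.sqrt (gradNormSq g x)

/-- Frobenius norm `|D²g(x)|` of the spatial Hessian. -/
noncomputable def hessNorm {n : ℕ} (g : EuclideanSpace ℝ (Fin n) → ℝ)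
    (x : EuclideanSpace ℝ (Fin n)) : ℝ :=
  Real.sqrt (∑ i, ∑ j, (pd2 g x i j) ^ 2)

/-- Right-hand side of the graphical mean curvature flow equation:
`∑ᵢⱼ (δᵢⱼ − ∂ᵢg ∂ⱼg / (1+|Dg|²)) ∂ᵢ∂ⱼ g`. -/
noncomputable def mcfRHS {n : ℕ} (g : EuclideanSpace ℝ (Fin n) → ℝ)
    (x : EuclideanSpace ℝ (Fin n)) : ℝ :=
  ∑ i, ∑ j,
    ((if i = j then (1 : ℝ) else 0) - pd g x i * pd g x j / (1 + gradNormSq g x)) * pd2 g x i j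

/-- `f` is a (smooth) graphical mean curvature flow on `I × U`. -/
def IsGMCF {n : ℕ} (I : Set ℝ) (U : Set (EuclideanSpace ℝ (Fin n)))
    (f : ℝ → EuclideanSpace ℝ (Fin n) → ℝ) : Prop :=
  ContDiffOn ℝ (⊤ : ℕ∞) (fun p : ℝ × EuclideanSpace ℝ (Fin n) => f p.1 p.2) (I ×ˢ U) ∧
  ∀ t ∈ I, ∀ x ∈ U, deriv (fun s => f s x) t = mcfRHS (f t) x

/-- Squared norm `|A|²(g,x)` of the second fundamental form of the graph of `g`
at `(x, g(x))`. -/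
noncomputable def secondFF2 {n : ℕ} (g : EuclideanSpace ℝ (Fin n) → ℝ)
    (x : EuclideanSpace ℝ (Fin n)) : ℝ :=
  ∑ i, ∑ j, ∑ k, ∑ l,
    ((if i = k then (1 : ℝ) else 0) - pd g x i * pd g x k / (1 + gradNormSq g x)) *
      ((if j = l then (1 : ℝ) else 0) - pd g x j * pd g x l / (1 + gradNormSq g x)) *
      (pd2 g x i j / Real.sqrt (1 + gradNormSq g x)) *
      (pd2 g x k l / Real.sqrt (1 + gradNormSq g x))


section
noncomputable def dd {n : ℕ} (w : ℝ × EuclideanSpace ℝ (Fin n))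
    (F : ℝ × EuclideanSpace ℝ (Fin n) → ℝ) : ℝ × EuclideanSpace ℝ (Fin n) → ℝ :=
  fun p => fderiv ℝ F p w

noncomputable def ei {n : ℕ} (i : Fin n) : ℝ × EuclideanSpace ℝ (Fin n) :=
  (0, EuclideanSpace.single i 1)

noncomputable def et (n : ℕ) : ℝ × EuclideanSpace ℝ (Fin n) := (1, 0)

/-- smooth on `Ω`. -/
def Sm {n : ℕ} (Ω : Set (ℝ × EuclideanSpace ℝ (Fin n)))
    (F : ℝ × EuclideanSpace ℝ (Fin n) → ℝ) : Prop := ContDiffOn ℝ (⊤ : ℕ∞) F Ω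
end

section calculus
variable {n : ℕ} {Ω : Set (ℝ × EuclideanSpace ℝ (Fin n))} (hΩ : IsOpen Ω)
  {F G H : ℝ × EuclideanSpace ℝ (Fin n) → ℝ} {p w v : ℝ × EuclideanSpace ℝ (Fin n)}

theorem Sm.dd (hΩ : IsOpen Ω) (hF : Sm Ω F) (w) : Sm Ω (dd w F) := by
  have := hF.fderiv_of_isOpen (m := (⊤ : ℕ∞)) hΩ (by simp)
  exact this.clm_apply contDiffOn_const

theorem Sm.diff (hΩ : IsOpen Ω) (hF : Sm Ω F) (hp : p ∈ Ω) : DifferentiableAt ℝ F p :=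
  (hF.contDiffAt (hΩ.mem_nhds hp)).differentiableAt (by simp)

theorem Sm.mul (hF : Sm Ω F) (hG : Sm Ω G) : Sm Ω (fun p => F p * G p) := ContDiffOn.mul hF hG
theorem Sm.add (hF : Sm Ω F) (hG : Sm Ω G) : Sm Ω (fun p => F p + G p) := ContDiffOn.add hF hG
theorem Sm.sub (hF : Sm Ω F) (hG : Sm Ω G) : Sm Ω (fun p => F p - G p) := ContDiffOn.sub hF hG
theorem Sm.const (c : ℝ) : Sm Ω (fun _ => c) := contDiffOn_const
theorem Sm.sum {ι : Type*} {s : Finset ι} {F : ι → ℝ × EuclideanSpace ℝ (Fin n) → ℝ}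
    (hF : ∀ i ∈ s, Sm Ω (F i)) : Sm Ω (fun p => ∑ i ∈ s, F i p) := ContDiffOn.sum hF

theorem dd_congr (hΩ : IsOpen Ω) (h : ∀ p ∈ Ω, F p = G p) (hp : p ∈ Ω) (w) :
    dd w F p = dd w G p := by
  have : F =ᶠ[nhds p] G := Filter.eventuallyEq_of_mem (hΩ.mem_nhds hp) h
  simp only [dd, this.fderiv_eq]

theorem dd_mul (hF : DifferentiableAt ℝ F p) (hG : DifferentiableAt ℝ G p) :
    dd w (fun p => F p * G p) p = F p * dd w G p + G p * dd w F p := by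
  simp only [dd]
  rw [fderiv_fun_mul hF hG]; simp

theorem dd_add (hF : DifferentiableAt ℝ F p) (hG : DifferentiableAt ℝ G p) :
    dd w (fun p => F p + G p) p = dd w F p + dd w G p := by
  simp only [dd]
  rw [fderiv_fun_add hF hG]; simp

theorem dd_sub (hF : DifferentiableAt ℝ F p) (hG : DifferentiableAt ℝ G p) :
    dd w (fun p => F p - G p) p = dd w F p - dd w G p := by
  simp only [dd]
  rw [fderiv_fun_sub hF hG]; simp

theorem dd_const (c : ℝ) : dd w (fun _ => c) p = 0 := by
  simp [dd]

theorem dd_sum {ι : Type*} {s : Finset ι} {F : ι → ℝ × EuclideanSpace ℝ (Fin n) → ℝ}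
    (hF : ∀ i ∈ s, DifferentiableAt ℝ (F i) p) :
    dd w (fun p => ∑ i ∈ s, F i p) p = ∑ i ∈ s, dd w (F i) p := by
  simp only [dd]
  rw [fderiv_fun_sum hF]; simp

theorem dd_comm (hΩ : IsOpen Ω) (hF : Sm Ω F) (hp : p ∈ Ω) (v w) :
    dd v (dd w F) p = dd w (dd v F) p := by
  have h2 : ContDiffAt ℝ (⊤ : ℕ∞) F p := hF.contDiffAt (hΩ.mem_nhds hp)
  have hs : IsSymmSndFDerivAt ℝ F p := h2.isSymmSndFDerivAt (by
    simp only [minSmoothness_of_isRCLikeNormedField]; exact WithTop.coe_le_coe.2 le_top)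
  have hd : DifferentiableAt ℝ (fderiv ℝ F) p :=
    ((hF.fderiv_of_isOpen (m := (⊤ : ℕ∞)) hΩ (by simp)).contDiffAt (hΩ.mem_nhds hp)).differentiableAt
      (by simp)
  have key : ∀ v w, dd v (dd w F) p = fderiv ℝ (fderiv ℝ F) p v w := by
    intro v w
    have : dd w F = fun p => fderiv ℝ F p w := rfl
    rw [this]
    simp only [dd]
    rw [fderiv_clm_apply hd (by fun_prop)]
    simp
  rw [key, key]; exact hs.eq v w

theorem dd_lin_add (v w) : dd (v + w) F p = dd v F p + dd w F p := by simp [dd]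
theorem dd_lin_smul (c : ℝ) (w) : dd (c • w) F p = c * dd w F p := by simp [dd]
theorem dd_lin_sum {ι : Type*} (s : Finset ι) (c : ι → ℝ) (w : ι → ℝ × EuclideanSpace ℝ (Fin n)) :
    dd (∑ i ∈ s, c i • w i) F p = ∑ i ∈ s, c i * dd (w i) F p := by simp [dd]

/-- second derivative in a combined direction -/
theorem dd2_comb (hΩ : IsOpen Ω) (hF : Sm Ω F) (hp : p ∈ Ω) (v w) (c : ℝ) :
    dd (v + c • w) (dd (v + c • w) F) p =
      dd v (dd v F) p + 2 * c * dd v (dd w F) p + c ^ 2 * dd w (dd w F) p := by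
  have h : ∀ q ∈ Ω, dd (v + c • w) F q = dd v F q + c * dd w F q := by
    intro q _; rw [dd_lin_add, dd_lin_smul]
  have d1 := (hF.dd hΩ v).diff hΩ hp
  have d2 := (hF.dd hΩ w).diff hΩ hp
  rw [dd_congr hΩ h hp, dd_add d1 (by fun_prop), dd_mul (by fun_prop) d2, dd_const]
  simp only [dd_lin_add, dd_lin_smul]
  rw [dd_comm hΩ hF hp w v]; ring

theorem dd2_sum (hΩ : IsOpen Ω) (hF : Sm Ω F) (hp : p ∈ Ω) (v) {ι : Type*} (s : Finset ι)
    (c : ι → ℝ) (w : ι → ℝ × EuclideanSpace ℝ (Fin n)) :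
    dd v (dd (∑ i ∈ s, c i • w i) F) p = ∑ i ∈ s, c i * dd v (dd (w i) F) p := by
  have h : ∀ q ∈ Ω, dd (∑ i ∈ s, c i • w i) F q = ∑ i ∈ s, c i * dd (w i) F q := by
    intro q _; rw [dd_lin_sum]
  have d : ∀ i, DifferentiableAt ℝ (dd (w i) F) p := fun i => (hF.dd hΩ (w i)).diff hΩ hp
  rw [dd_congr hΩ h hp, dd_sum (fun i _ => by have := d i; fun_prop)]
  refine Finset.sum_congr rfl fun i _ => ?_
  rw [dd_mul (by fun_prop) (d i), dd_const]; ring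

theorem dd2_mul (hΩ : IsOpen Ω) (hF : Sm Ω F) (hG : Sm Ω G) (hp : p ∈ Ω) (v w) :
    dd v (dd w (fun p => F p * G p)) p =
      F p * dd v (dd w G) p + dd v F p * dd w G p + dd v G p * dd w F p
        + G p * dd v (dd w F) p := by
  have h : ∀ q ∈ Ω, dd w (fun p => F p * G p) q = F q * dd w G q + G q * dd w F q := by
    intro q hq; rw [dd_mul (hF.diff hΩ hq) (hG.diff hΩ hq)]
  have f0 := hF.diff hΩ hp
  have g0 := hG.diff hΩ hp
  have f1 := (hF.dd hΩ w).diff hΩ hp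
  have g1 := (hG.dd hΩ w).diff hΩ hp
  rw [dd_congr hΩ h hp, dd_add (by fun_prop) (by fun_prop), dd_mul f0 g1, dd_mul g0 f1]
  ring

theorem dd2_add (hΩ : IsOpen Ω) (hF : Sm Ω F) (hG : Sm Ω G) (hp : p ∈ Ω) (v w) :
    dd v (dd w (fun p => F p + G p)) p = dd v (dd w F) p + dd v (dd w G) p := by
  have h : ∀ q ∈ Ω, dd w (fun p => F p + G p) q = dd w F q + dd w G q := by
    intro q hq; rw [dd_add (hF.diff hΩ hq) (hG.diff hΩ hq)]
  rw [dd_congr hΩ h hp, dd_add ((hF.dd hΩ w).diff hΩ hp) ((hG.dd hΩ w).diff hΩ hp)]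

theorem dd2_sub (hΩ : IsOpen Ω) (hF : Sm Ω F) (hG : Sm Ω G) (hp : p ∈ Ω) (v w) :
    dd v (dd w (fun p => F p - G p)) p = dd v (dd w F) p - dd v (dd w G) p := by
  have h : ∀ q ∈ Ω, dd w (fun p => F p - G p) q = dd w F q - dd w G q := by
    intro q hq; rw [dd_sub (hF.diff hΩ hq) (hG.diff hΩ hq)]
  rw [dd_congr hΩ h hp, dd_sub ((hF.dd hΩ w).diff hΩ hp) ((hG.dd hΩ w).diff hΩ hp)]

theorem dd2_const (c : ℝ) (v w) : dd v (dd w (fun _ => c)) p = 0 := by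
  have : dd w (fun _ : ℝ × EuclideanSpace ℝ (Fin n) => c) = fun _ => 0 := by
    funext q; exact dd_const c
  rw [this, dd_const]

theorem dd2_fsum (hΩ : IsOpen Ω) {ι : Type*} (s : Finset ι)
    {F : ι → ℝ × EuclideanSpace ℝ (Fin n) → ℝ}
    (hF : ∀ i, Sm Ω (F i)) (hp : p ∈ Ω) (v w) :
    dd v (dd w (fun p => ∑ i ∈ s, F i p)) p = ∑ i ∈ s, dd v (dd w (F i)) p := by
  have h : ∀ q ∈ Ω, dd w (fun p => ∑ i ∈ s, F i p) q = ∑ i ∈ s, dd w (F i) q := by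
    intro q hq; rw [dd_sum (fun i _ => (hF i).diff hΩ hq)]
  rw [dd_congr hΩ h hp, dd_sum (fun i _ => ((hF i).dd hΩ w).diff hΩ hp)]

/-- second derivative test along a line -/
theorem line_test {g : ℝ → ℝ} (hg : ContDiffAt ℝ 2 g 0) (hm : IsLocalMax g 0) :
    deriv (deriv g) 0 ≤ 0 := by
  by_contra! hpos
  have h0 := hm.deriv_eq_zero
  have hmin := isLocalMin_of_deriv_deriv_pos hpos h0 hg.continuousAt
  have hc : g =ᶠ[nhds 0] fun _ => g 0 := by
    filter_upwards [hm, hmin] with x h1 h2 using le_antisymm h1 h2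
  have := hc.deriv.deriv_eq
  simp at this
  rw [this] at hpos; exact lt_irrefl _ hpos

theorem max_test_space (hΩ : IsOpen Ω) (hF : Sm Ω F) (hp : p ∈ Ω)
    (hm : ∀ᶠ q in nhds p, q.1 ≤ p.1 → F q ≤ F p) (v : EuclideanSpace ℝ (Fin n)) :
    dd (0, v) F p = 0 ∧ dd (0, v) (dd (0, v) F) p ≤ 0 := by
  set w : ℝ × EuclideanSpace ℝ (Fin n) := (0, v) with hw
  have hcont : Filter.Tendsto (fun s : ℝ => p + s • w) (nhds 0) (nhds p) := by
    have : ContinuousAt (fun s : ℝ => p + s • w) 0 := by fun_prop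
    simpa [ContinuousAt] using this
  have hmg : IsLocalMax (fun s : ℝ => F (p + s • w)) 0 := by
    have := hcont.eventually hm
    filter_upwards [this] with s hs
    simpa using hs (by simp [hw])
  have hder : ∀ (H : ℝ × EuclideanSpace ℝ (Fin n) → ℝ) (s : ℝ), DifferentiableAt ℝ H (p + s • w) →
      HasDerivAt (fun s : ℝ => H (p + s • w)) (dd w H (p + s • w)) s := by
    intro H s hH
    have hl : HasDerivAt (fun s : ℝ => p + s • w) w s := by
      simpa using ((hasDerivAt_id s).smul_const w).const_add p
    exact hH.hasFDerivAt.comp_hasDerivAt s hl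
  have hev : ∀ᶠ s in nhds (0 : ℝ), p + s • w ∈ Ω := hcont.eventually (hΩ.mem_nhds hp)
  have hd1 : (deriv fun s : ℝ => F (p + s • w)) =ᶠ[nhds 0] fun s => dd w F (p + s • w) := by
    filter_upwards [hev] with s hs
    exact (hder F s (hF.diff hΩ hs)).deriv
  have p0 : p + (0:ℝ) • w = p := by simp
  have hC : ContDiffAt ℝ 2 (fun s : ℝ => F (p + s • w)) 0 := by
    have h2 : ContDiffAt ℝ 2 F (p + (0:ℝ) • w) := by
      rw [p0]; exact (hF.contDiffAt (hΩ.mem_nhds hp)).of_le (by exact WithTop.coe_le_coe.2 le_top)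
    exact h2.comp (0:ℝ) (by fun_prop)
  constructor
  · have := hmg.deriv_eq_zero
    rw [hd1.eq_of_nhds] at this
    simpa using this
  · have := line_test hC hmg
    rw [hd1.deriv_eq, (hder (dd w F) 0 (by rw [p0]; exact (hF.dd hΩ w).diff hΩ hp)).deriv] at this
    simpa using this

theorem max_test_time (hΩ : IsOpen Ω) (hF : Sm Ω F) (hp : p ∈ Ω)
    (hm : ∀ᶠ q in nhds p, q.1 ≤ p.1 → F q ≤ F p) :
    0 ≤ dd (et n) F p := by
  have hcont : Filter.Tendsto (fun s : ℝ => p + s • et n) (nhds 0) (nhds p) := by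
    have : ContinuousAt (fun s : ℝ => p + s • et n) 0 := by fun_prop
    simpa [ContinuousAt] using this
  have hl : HasDerivAt (fun s : ℝ => p + s • et n) (et n) 0 := by
    simpa using ((hasDerivAt_id (0:ℝ)).smul_const (et n)).const_add p
  have hd : HasDerivAt (fun s : ℝ => F (p + s • et n)) (dd (et n) F p) 0 := by
    have h1 : HasFDerivAt F (fderiv ℝ F p) (p + (0:ℝ) • et n) := by
      simpa using (hF.diff hΩ hp).hasFDerivAt
    exact h1.comp_hasDerivAt 0 hl
  by_contra! hneg
  have hlt := hd.hasDerivWithinAt (s := Set.Iio 0)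
  rw [hasDerivWithinAt_iff_tendsto_slope' (by simp)] at hlt
  have h1 := hlt.eventually (gt_mem_nhds hneg)
  have h2 : ∀ᶠ s in nhdsWithin (0:ℝ) (Set.Iio 0), s < 0 ∧ F (p + s • et n) ≤ F p := by
    have := (hcont.eventually hm).filter_mono (nhdsWithin_le_nhds (s := Set.Iio (0:ℝ)))
    filter_upwards [this, self_mem_nhdsWithin] with s hs hs0
    have hs0 : s < 0 := hs0
    exact ⟨hs0, hs (by simp [et]; exact hs0.le)⟩
  obtain ⟨s, h3, h4, h5⟩ := (h1.and h2).exists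
  rw [slope_def_field] at h3
  simp at h3
  have : 0 ≤ (F (p + s • et n) - F p) / s := div_nonneg_of_nonpos (by linarith) h4.le
  linarith

/-- trace against `I - p⊗p/(1+|p|²)` is nonpositive at a spatial maximum. -/
theorem trace_test (hΩ : IsOpen Ω) (hF : Sm Ω F) (hp : p ∈ Ω)
    (hm : ∀ᶠ q in nhds p, q.1 ≤ p.1 → F q ≤ F p) (a : Fin n → ℝ) :
    ∑ i, dd (ei i) (dd (ei i) F) p
      - dd (∑ i, a i • ei i) (dd (∑ i, a i • ei i) F) p / (1 + ∑ i, a i ^ 2) ≤ 0 := by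
  set P : ℝ × EuclideanSpace ℝ (Fin n) := ∑ i, a i • ei i with hP
  set s := ∑ i, a i ^ 2 with hs
  have hs0 : 0 ≤ s := Finset.sum_nonneg fun i _ => sq_nonneg _
  set r := Real.sqrt (1 + s) with hr
  have hr2 : r ^ 2 = 1 + s := Real.sq_sqrt (by linarith)
  have hr1 : 0 < r := Real.sqrt_pos.2 (by linarith)
  set c := 1 / (r * (r + 1)) with hc
  have hP2 : P = (0, P.2) := by
    ext1
    · simp [hP, ei, Prod.fst_sum]
    · rfl
  have hi : ∀ i, dd (ei i) (dd (ei i) F) p + 2 * (-(c * a i)) * dd (ei i) (dd P F) p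
      + (-(c * a i)) ^ 2 * dd P (dd P F) p ≤ 0 := by
    intro i
    rw [← dd2_comb hΩ hF hp]
    have := (max_test_space hΩ hF hp hm (EuclideanSpace.single i 1 + (-(c * a i)) • P.2)).2
    have e : (ei i + (-(c * a i)) • P : ℝ × EuclideanSpace ℝ (Fin n)) =
      (0, EuclideanSpace.single i 1 + (-(c * a i)) • P.2) := by
      rw [hP2]; simp [ei]
    rw [e]; exact this
  have hsum := Finset.sum_nonpos fun i (_ : i ∈ Finset.univ) => hi i
  have e1 : ∑ i, a i * dd (ei i) (dd P F) p = dd P (dd P F) p := by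
    conv_rhs => rw [hP, dd_lin_sum]
  have e2 : ∑ i, (dd (ei i) (dd (ei i) F) p + 2 * (-(c * a i)) * dd (ei i) (dd P F) p
      + (-(c * a i)) ^ 2 * dd P (dd P F) p) = ∑ i, dd (ei i) (dd (ei i) F) p
      - 2 * c * dd P (dd P F) p + c ^ 2 * s * dd P (dd P F) p := by
    rw [Finset.sum_add_distrib, Finset.sum_add_distrib, ← Finset.sum_mul]
    have : ∑ i, 2 * (-(c * a i)) * dd (ei i) (dd P F) p = - 2 * c * dd P (dd P F) p := by
      rw [← e1, Finset.mul_sum]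
      exact Finset.sum_congr rfl fun i _ => by ring
    rw [this, hs, Finset.mul_sum]
    have : ∑ i, (-(c * a i)) ^ 2 = ∑ i, c ^ 2 * a i ^ 2 :=
      Finset.sum_congr rfl fun i _ => by ring
    rw [this]; ring
  have e3 : 2 * c - c ^ 2 * s = 1 / (1 + s) := by
    have : s = r ^ 2 - 1 := by linarith
    rw [← hr2, this, hc]; field_simp; ring
  rw [e2] at hsum
  have : dd P (dd P F) p / (1 + s) = (2 * c - c ^ 2 * s) * dd P (dd P F) p := by
    rw [e3]; ring
  rw [this]; linarith
end calculus

section pde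
variable {n : ℕ} {Ω : Set (ℝ × EuclideanSpace ℝ (Fin n))}
  {F : ℝ × EuclideanSpace ℝ (Fin n) → ℝ} {p : ℝ × EuclideanSpace ℝ (Fin n)}

/-- `1 + |DF|²`. -/
noncomputable def QQ (F : ℝ × EuclideanSpace ℝ (Fin n) → ℝ) :
    ℝ × EuclideanSpace ℝ (Fin n) → ℝ :=
  fun p => 1 + ∑ k, dd (ei k) F p * dd (ei k) F p

/-- The localization function. -/
noncomputable def phi (F : ℝ × EuclideanSpace ℝ (Fin n) → ℝ) (R : ℝ)
    (x₀ : EuclideanSpace ℝ (Fin n)) (h c t₀ : ℝ) : ℝ × EuclideanSpace ℝ (Fin n) → ℝ :=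
  fun p => R ^ 2 - ‖p.2 - x₀‖ ^ 2 - (F p - h) * (F p - h) - c * (p.1 - t₀)

/-- The equation, in gradient form. -/
def PDE (Ω : Set (ℝ × EuclideanSpace ℝ (Fin n))) (F : ℝ × EuclideanSpace ℝ (Fin n) → ℝ) : Prop :=
  ∀ q ∈ Ω, dd (et n) F q = ∑ i, dd (ei i) (dd (ei i) F) q
    - (∑ i, dd (ei i) F q * dd (ei i) (QQ F) q) / (2 * QQ F q)

theorem QQ_pos (F : ℝ × EuclideanSpace ℝ (Fin n) → ℝ) (p) : 1 ≤ QQ F p := by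
  have : 0 ≤ ∑ k, dd (ei k) F p * dd (ei k) F p :=
    Finset.sum_nonneg fun k _ => mul_self_nonneg _
  simp only [QQ]; linarith

theorem Sm.QQ (hΩ : IsOpen Ω) (hF : Sm Ω F) : Sm Ω (QQ F) :=
  (Sm.const 1).add (Sm.sum fun k _ => (hF.dd hΩ _).mul (hF.dd hΩ _))

theorem dd_QQ (hΩ : IsOpen Ω) (hF : Sm Ω F) (hp : p ∈ Ω) (w) :
    dd w (QQ F) p = 2 * ∑ k, dd (ei k) F p * dd w (dd (ei k) F) p := by
  have d := fun k : Fin n => (hF.dd hΩ (ei k)).diff hΩ hp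
  unfold QQ
  rw [dd_add (by fun_prop) (by fun_prop), dd_const, dd_sum (fun k _ => by fun_prop),
    Finset.mul_sum, zero_add]
  refine Finset.sum_congr rfl fun k _ => ?_
  rw [dd_mul (d k) (d k)]; ring

theorem dd2_QQ (hΩ : IsOpen Ω) (hF : Sm Ω F) (hp : p ∈ Ω) (w) :
    dd w (dd w (QQ F)) p = 2 * ∑ k, dd w (dd (ei k) F) p ^ 2
      + 2 * ∑ k, dd (ei k) F p * dd w (dd w (dd (ei k) F)) p := by
  have d := fun k : Fin n => hF.dd hΩ (ei k)
  unfold QQ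
  rw [dd2_add hΩ (Sm.const 1) (Sm.sum fun k _ => (d k).mul (d k)) hp, dd2_const,
    dd2_fsum hΩ _ (fun k => (d k).mul (d k)) hp, Finset.mul_sum, Finset.mul_sum, zero_add,
    ← Finset.sum_add_distrib]
  refine Finset.sum_congr rfl fun k _ => ?_
  rw [dd2_mul hΩ (d k) (d k) hp]; ring

theorem QQ_evol (hΩ : IsOpen Ω) (hF : Sm Ω F) (hpde : PDE Ω F) (hp : p ∈ Ω) :
    dd (et n) (QQ F) p =
      (∑ i, dd (ei i) (dd (ei i) (QQ F)) p
      - dd (∑ i, dd (ei i) F p • ei i) (dd (∑ i, dd (ei i) F p • ei i) (QQ F)) p / QQ F p)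
      - 2 * ∑ i, ∑ k, dd (ei i) (dd (ei k) F) p ^ 2
      - (∑ i, dd (ei i) (QQ F) p ^ 2) / (2 * QQ F p)
      + (∑ i, dd (ei i) F p * dd (ei i) (QQ F) p) ^ 2 / QQ F p ^ 2 := by
  have hQ := hF.QQ hΩ
  have d := fun k : Fin n => hF.dd hΩ (ei k)
  have dQ := fun k : Fin n => (hQ.dd hΩ (ei k))
  have hq : 1 ≤ QQ F p := QQ_pos F p
  set q := QQ F p with hqdef
  -- the differentiated equation
  have hk : ∀ k : Fin n, dd (et n) (dd (ei k) F) p =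
      ∑ i, dd (ei i) (dd (ei i) (dd (ei k) F)) p
      - ((∑ i, dd (ei i) F p * dd (ei k) (dd (ei i) (QQ F)) p)
        + ∑ i, dd (ei i) (QQ F) p * dd (ei i) (dd (ei k) F) p) / (2 * q)
      + (∑ i, dd (ei i) F p * dd (ei i) (QQ F) p) * dd (ei k) (QQ F) p / (2 * q ^ 2) := by
    intro k
    rw [dd_comm hΩ hF hp]
    -- multiply out
    have e : ∀ r ∈ Ω, 2 * QQ F r * dd (et n) F r = 2 * QQ F r * (∑ i, dd (ei i) (dd (ei i) F) r)
        - ∑ i, dd (ei i) F r * dd (ei i) (QQ F) r := by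
      intro r hr
      have := QQ_pos F r
      rw [hpde r hr]; field_simp
    have e' := dd_congr hΩ e hp (ei k)
    have s1 : Sm Ω (fun r => 2 * QQ F r) := (Sm.const 2).mul hQ
    have s2 : Sm Ω (fun r => ∑ i, dd (ei i) (dd (ei i) F) r) :=
      Sm.sum fun i _ => (d i).dd hΩ _
    have s3 : Sm Ω (fun r => ∑ i, dd (ei i) F r * dd (ei i) (QQ F) r) :=
      Sm.sum fun i _ => (d i).mul (dQ i)
    rw [dd_mul (s1.diff hΩ hp) ((hF.dd hΩ _).diff hΩ hp),
      dd_sub ((s1.mul s2).diff hΩ hp) (s3.diff hΩ hp), dd_mul (s1.diff hΩ hp) (s2.diff hΩ hp),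
      dd_mul ((Sm.const 2).diff hΩ hp) (hQ.diff hΩ hp), dd_const,
      dd_sum (fun i _ => ((d i).dd hΩ _).diff hΩ hp),
      dd_sum (fun i _ => ((d i).mul (dQ i)).diff hΩ hp), hpde p hp] at e'
    have c1 : ∀ i : Fin n, dd (ei k) (dd (ei i) (dd (ei i) F)) p
        = dd (ei i) (dd (ei i) (dd (ei k) F)) p := by
      intro i
      rw [dd_comm hΩ (d i) hp]
      exact dd_congr hΩ (fun r hr => dd_comm hΩ hF hr _ _) hp _
    have c2 : ∑ i, dd (ei k) (fun r => dd (ei i) F r * dd (ei i) (QQ F) r) p =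
        (∑ i, dd (ei i) F p * dd (ei k) (dd (ei i) (QQ F)) p)
        + ∑ i, dd (ei i) (QQ F) p * dd (ei i) (dd (ei k) F) p := by
      rw [← Finset.sum_add_distrib]
      refine Finset.sum_congr rfl fun i _ => ?_
      rw [dd_mul ((d i).diff hΩ hp) ((dQ i).diff hΩ hp), dd_comm hΩ hF hp (ei k) (ei i)]
    rw [c2, Finset.sum_congr rfl fun i _ => c1 i] at e'
    rw [← hqdef] at e'
    have hq0 : q ≠ 0 := by linarith
    field_simp
    field_simp at e'
    linarith
  have hPP : dd (∑ i, dd (ei i) F p • ei i) (dd (∑ i, dd (ei i) F p • ei i) (QQ F)) p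
      = ∑ k, dd (ei k) F p * ∑ i, dd (ei i) F p * dd (ei k) (dd (ei i) (QQ F)) p := by
    rw [dd_lin_sum]
    refine Finset.sum_congr rfl fun k _ => ?_
    rw [dd2_sum hΩ hQ hp]
  have hG : ∑ k, dd (ei k) F p * ∑ i, dd (ei i) (QQ F) p * dd (ei i) (dd (ei k) F) p
      = (∑ i, dd (ei i) (QQ F) p ^ 2) / 2 := by
    simp_rw [Finset.mul_sum]
    rw [Finset.sum_comm, Finset.sum_div]
    refine Finset.sum_congr rfl fun i _ => ?_
    have := dd_QQ hΩ hF hp (ei i)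
    have e : ∑ k, dd (ei k) F p * (dd (ei i) (QQ F) p * dd (ei i) (dd (ei k) F) p)
      = dd (ei i) (QQ F) p * ∑ k, dd (ei k) F p * dd (ei i) (dd (ei k) F) p := by
      rw [Finset.mul_sum]
      exact Finset.sum_congr rfl fun k _ => by ring
    rw [e, show ∑ k, dd (ei k) F p * dd (ei i) (dd (ei k) F) p = dd (ei i) (QQ F) p / 2 by linarith]
    ring
  have hL : ∑ i, dd (ei i) (dd (ei i) (QQ F)) p
      = 2 * ∑ i, ∑ k, dd (ei i) (dd (ei k) F) p ^ 2
        + 2 * ∑ k, dd (ei k) F p * ∑ i, dd (ei i) (dd (ei i) (dd (ei k) F)) p := by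
    simp_rw [dd2_QQ hΩ hF hp]
    rw [Finset.sum_add_distrib, ← Finset.mul_sum, ← Finset.mul_sum]
    congr 2
    simp_rw [Finset.mul_sum]
    rw [Finset.sum_comm]
  rw [dd_QQ hΩ hF hp, hL, hPP]
  set K := ∑ i, dd (ei i) F p * dd (ei i) (QQ F) p with hK
  have hT : ∑ k, dd (ei k) F p * dd (et n) (dd (ei k) F) p
     = ∑ k, dd (ei k) F p * ∑ i, dd (ei i) (dd (ei i) (dd (ei k) F)) p
      - ((∑ k, dd (ei k) F p * ∑ i, dd (ei i) F p * dd (ei k) (dd (ei i) (QQ F)) p)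
        + ∑ k, dd (ei k) F p * ∑ i, dd (ei i) (QQ F) p * dd (ei i) (dd (ei k) F) p) / (2 * q)
      + K * K / (2 * q ^ 2) := by
    conv_rhs => enter [2, 1, 2]; rw [hK]
    rw [← Finset.sum_add_distrib, Finset.mul_sum, Finset.sum_div, Finset.sum_div,
      ← Finset.sum_sub_distrib, ← Finset.sum_add_distrib]
    refine Finset.sum_congr rfl fun k _ => ?_
    rw [hk k]; ring
  rw [hT, hG]
  field_simp
  ring

theorem phi_r (x₀ : EuclideanSpace ℝ (Fin n)) (p v w : ℝ × EuclideanSpace ℝ (Fin n)) :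
    dd w (fun p : ℝ × EuclideanSpace ℝ (Fin n) => ‖p.2 - x₀‖ ^ 2) p = 2 * inner ℝ (p.2 - x₀) w.2 ∧
    dd v (dd w (fun p : ℝ × EuclideanSpace ℝ (Fin n) => ‖p.2 - x₀‖ ^ 2)) p
      = 2 * inner ℝ v.2 w.2 := by
  have h1 : ∀ p : ℝ × EuclideanSpace ℝ (Fin n),
      dd w (fun p : ℝ × EuclideanSpace ℝ (Fin n) => ‖p.2 - x₀‖ ^ 2) p
        = 2 * inner ℝ (p.2 - x₀) w.2 := by
    intro p
    have : HasFDerivAt (fun p : ℝ × EuclideanSpace ℝ (Fin n) => p.2 - x₀)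
      (ContinuousLinearMap.snd ℝ ℝ (EuclideanSpace ℝ (Fin n))) p := hasFDerivAt_snd.sub_const x₀
    simp only [dd]
    rw [this.norm_sq.fderiv]; simp [inner_sub_left]
  refine ⟨h1 p, ?_⟩
  rw [show dd w (fun p : ℝ × EuclideanSpace ℝ (Fin n) => ‖p.2 - x₀‖ ^ 2) = _ from funext h1]
  have : HasFDerivAt (fun p : ℝ × EuclideanSpace ℝ (Fin n) => p.2 - x₀)
      (ContinuousLinearMap.snd ℝ ℝ (EuclideanSpace ℝ (Fin n))) p := hasFDerivAt_snd.sub_const x₀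
  have h2 := (this.inner ℝ (hasFDerivAt_const w.2 p)).const_mul 2
  simp only [dd]
  rw [h2.fderiv]; simp

theorem Sm.r (x₀ : EuclideanSpace ℝ (Fin n)) :
    Sm Ω (fun p : ℝ × EuclideanSpace ℝ (Fin n) => ‖p.2 - x₀‖ ^ 2) := by
  have : ContDiff ℝ (⊤ : ℕ∞) (fun p : ℝ × EuclideanSpace ℝ (Fin n) => ‖p.2 - x₀‖ ^ 2) := by
    apply ContDiff.norm_sq ℝ; fun_prop
  exact this.contDiffOn

theorem Sm.t (c t₀ : ℝ) :
    Sm Ω (fun p : ℝ × EuclideanSpace ℝ (Fin n) => c * (p.1 - t₀)) := by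
  have : ContDiff ℝ (⊤ : ℕ∞) (fun p : ℝ × EuclideanSpace ℝ (Fin n) => c * (p.1 - t₀)) := by fun_prop
  exact this.contDiffOn

theorem phi_t (c t₀ : ℝ) (p v w : ℝ × EuclideanSpace ℝ (Fin n)) :
    dd w (fun p : ℝ × EuclideanSpace ℝ (Fin n) => c * (p.1 - t₀)) p = c * w.1 ∧
    dd v (dd w (fun p : ℝ × EuclideanSpace ℝ (Fin n) => c * (p.1 - t₀))) p = 0 := by
  have h1 : ∀ p : ℝ × EuclideanSpace ℝ (Fin n),
      dd w (fun p : ℝ × EuclideanSpace ℝ (Fin n) => c * (p.1 - t₀)) p = c * w.1 := by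
    intro p
    have : HasFDerivAt (fun p : ℝ × EuclideanSpace ℝ (Fin n) => p.1 - t₀)
      (ContinuousLinearMap.fst ℝ ℝ (EuclideanSpace ℝ (Fin n))) p := hasFDerivAt_fst.sub_const t₀
    simp only [dd]
    rw [(this.const_mul c).fderiv]; simp
  refine ⟨h1 p, ?_⟩
  rw [show dd w (fun p : ℝ × EuclideanSpace ℝ (Fin n) => c * (p.1 - t₀)) = _ from funext h1]
  exact dd_const _

theorem Sm.phi (hF : Sm Ω F) (R x₀ h c t₀) : Sm Ω (phi F R x₀ h c t₀) :=
  (((Sm.const _).sub (Sm.r x₀)).sub ((hF.sub (Sm.const h)).mul (hF.sub (Sm.const h)))).sub (Sm.t c t₀)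

theorem dd_phi (hΩ : IsOpen Ω) (hF : Sm Ω F) (hp : p ∈ Ω) (R x₀ h c t₀ w) :
    dd w (phi F R x₀ h c t₀) p =
      - 2 * inner ℝ (p.2 - x₀) w.2 - 2 * (F p - h) * dd w F p - c * w.1 := by
  have s1 : Sm Ω (fun _ : ℝ × EuclideanSpace ℝ (Fin n) => R ^ 2) := Sm.const _
  have s2 : Sm Ω (fun p : ℝ × EuclideanSpace ℝ (Fin n) => ‖p.2 - x₀‖ ^ 2) := Sm.r x₀
  have s3 := hF.sub (Sm.const (Ω := Ω) h)
  unfold phi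
  rw [dd_sub (((s1.sub s2).sub (s3.mul s3)).diff hΩ hp) ((Sm.t c t₀).diff hΩ hp),
    dd_sub ((s1.sub s2).diff hΩ hp) ((s3.mul s3).diff hΩ hp),
    dd_sub (s1.diff hΩ hp) (s2.diff hΩ hp), dd_const, dd_mul (s3.diff hΩ hp) (s3.diff hΩ hp),
    dd_sub (hF.diff hΩ hp) ((Sm.const h).diff hΩ hp), dd_const, (phi_r x₀ p w w).1,
    (phi_t c t₀ p w w).1]
  ring

theorem dd2_phi (hΩ : IsOpen Ω) (hF : Sm Ω F) (hp : p ∈ Ω) (R x₀ h c t₀ w) :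
    dd w (dd w (phi F R x₀ h c t₀)) p =
      - 2 * inner ℝ w.2 w.2 - 2 * (dd w F p) ^ 2 - 2 * (F p - h) * dd w (dd w F) p := by
  have s1 : Sm Ω (fun _ : ℝ × EuclideanSpace ℝ (Fin n) => R ^ 2) := Sm.const _
  have s2 : Sm Ω (fun p : ℝ × EuclideanSpace ℝ (Fin n) => ‖p.2 - x₀‖ ^ 2) := Sm.r x₀
  have s3 := hF.sub (Sm.const (Ω := Ω) h)
  unfold phi
  rw [dd2_sub hΩ ((s1.sub s2).sub (s3.mul s3)) (Sm.t c t₀) hp,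
    dd2_sub hΩ (s1.sub s2) (s3.mul s3) hp,
    dd2_sub hΩ s1 s2 hp, dd2_const, dd2_mul hΩ s3 s3 hp,
    dd_sub (hF.diff hΩ hp) ((Sm.const h).diff hΩ hp), dd_const,
    dd2_sub hΩ hF (Sm.const h) hp, dd2_const, (phi_r x₀ p w w).2,
    (phi_t c t₀ p w w).2]
  ring

theorem phi_evol (hΩ : IsOpen Ω) (hF : Sm Ω F) (hpde : PDE Ω F) (hp : p ∈ Ω) (R x₀ h c t₀) :
    dd (et n) (phi F R x₀ h c t₀) p =
      (∑ i, dd (ei i) (dd (ei i) (phi F R x₀ h c t₀)) p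
      - dd (∑ i, dd (ei i) F p • ei i) (dd (∑ i, dd (ei i) F p • ei i) (phi F R x₀ h c t₀)) p
        / QQ F p) + (2 * n - c) := by
  have hq : 1 ≤ QQ F p := QQ_pos F p
  have hq0 : QQ F p ≠ 0 := by linarith
  rw [dd_phi hΩ hF hp, hpde p hp]
  simp_rw [dd2_phi hΩ hF hp]
  set a := fun i => dd (ei i) F p with ha
  set P : ℝ × EuclideanSpace ℝ (Fin n) := ∑ i, a i • ei i with hP
  have hs : ∑ i, a i ^ 2 = QQ F p - 1 := by
    simp only [QQ, ha]; simp [sq]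
  have h1 : dd P F p = QQ F p - 1 := by
    rw [hP, dd_lin_sum, ← hs]
    exact Finset.sum_congr rfl fun i _ => by simp only [ha]; ring
  have h2 : inner ℝ P.2 P.2 = QQ F p - 1 := by
    have e : P.2 = WithLp.toLp 2 a := by
      rw [hP, Prod.snd_sum]
      ext j
      simp [ei, Finset.sum_apply, Pi.single_apply]
    rw [e, real_inner_self_eq_norm_sq, EuclideanSpace.norm_sq_eq, ← hs]
    simp
  have h3 : dd P (dd P F) p = (∑ i, dd (ei i) F p * dd (ei i) (QQ F) p) / 2 := by
    rw [hP, dd_lin_sum, Finset.sum_div]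
    refine Finset.sum_congr rfl fun i _ => ?_
    rw [dd2_sum hΩ hF hp, dd_QQ hΩ hF hp]
    ring
  have h4 : ∀ i : Fin n, inner ℝ (ei i : ℝ × EuclideanSpace ℝ (Fin n)).2 (ei i).2 = (1:ℝ) := by
    intro i; simp [ei]
  have h5 : ∑ i : Fin n, dd (ei i) F p ^ 2 = QQ F p - 1 := hs
  rw [h1, h2, h3]
  simp_rw [h4]
  have h6 : ∑ i : Fin n, 2 * (F p - h) * dd (ei i) (dd (ei i) F) p
    = 2 * (F p - h) * ∑ i : Fin n, dd (ei i) (dd (ei i) F) p := by rw [Finset.mul_sum]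
  have h7 : ∑ i : Fin n, 2 * dd (ei i) F p ^ 2 = 2 * (QQ F p - 1) := by
    rw [← Finset.mul_sum, h5]
  rw [Finset.sum_sub_distrib, Finset.sum_sub_distrib, h6, h7]
  simp only [et, inner_zero_right, Finset.sum_const, Finset.card_univ, Fintype.card_fin,
    nsmul_eq_mul]
  field_simp
  ring

theorem alg_ineq (f g : Fin n → ℝ) (A : Fin n → Fin n → ℝ) (q : ℝ) (hq : q = 1 + ∑ i, f i ^ 2)
    (hsym : ∀ i j, A i j = A j i) (hg : ∀ i, g i = ∑ j, f j * A i j) :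
    0 ≤ ∑ i, ∑ j, A i j ^ 2 - 2 * (∑ i, g i ^ 2) / q + (∑ i, f i * g i) ^ 2 / q ^ 2 := by
  set s := ∑ i, f i ^ 2 with hs
  set G := ∑ i, g i ^ 2 with hG
  set k := ∑ i, f i * g i with hk
  have hs0 : 0 ≤ s := Finset.sum_nonneg fun i _ => sq_nonneg _
  have hG0 : 0 ≤ G := Finset.sum_nonneg fun i _ => sq_nonneg _
  have hCS : k ^ 2 ≤ s * G := Finset.sum_mul_sq_le_sq_mul_sq _ _ _
  have hsq : ∀ α β : ℝ, 0 ≤ ∑ i, ∑ j, A i j ^ 2 - 4 * α * G + 2 * β * k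
      + 2 * α ^ 2 * (s * G + k ^ 2) - 4 * α * β * s * k + β ^ 2 * s ^ 2 := by
    intro α β
    have h0 : 0 ≤ ∑ i, ∑ j, (A i j - α * (f i * g j + g i * f j) + β * f i * f j) ^ 2 :=
      Finset.sum_nonneg fun i _ => Finset.sum_nonneg fun j _ => sq_nonneg _
    have e1 : ∑ i, ∑ j, A i j * (f i * g j) = G := by
      rw [Finset.sum_comm]
      refine Finset.sum_congr rfl fun j _ => ?_
      rw [sq]; nth_rewrite 2 [hg j]; rw [Finset.sum_mul]
      exact Finset.sum_congr rfl fun i _ => by rw [hsym i j]; ring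
    have e2 : ∑ i, ∑ j, A i j * (g i * f j) = G := by
      refine Finset.sum_congr rfl fun j _ => ?_
      rw [sq]; nth_rewrite 2 [hg j]; rw [Finset.sum_mul]
      exact Finset.sum_congr rfl fun i _ => by ring
    have e3 : ∑ i, ∑ j, A i j * (f i * f j) = k := by
      refine Finset.sum_congr rfl fun j _ => ?_
      rw [hg j, Finset.mul_sum]
      exact Finset.sum_congr rfl fun i _ => by ring
    have pr : ∀ u v : Fin n → ℝ, ∑ i, ∑ j, u i * v j = (∑ i, u i) * ∑ j, v j := by
      intro u v; rw [Finset.sum_mul_sum]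
    have e4 := pr (fun i => f i ^ 2) (fun i => g i ^ 2)
    have e5 := pr (fun i => g i ^ 2) (fun i => f i ^ 2)
    have e6 := pr (fun i => f i * g i) (fun i => f i * g i)
    have e7 := pr (fun i => f i ^ 2) (fun i => f i ^ 2)
    have e8 := pr (fun i => f i ^ 2) (fun i => f i * g i)
    have e9 := pr (fun i => f i * g i) (fun i => f i ^ 2)
    simp only [← hs, ← hG, ← hk] at e4 e5 e6 e7 e8 e9
    have : ∑ i, ∑ j, (A i j - α * (f i * g j + g i * f j) + β * f i * f j) ^ 2
      = ∑ i, ∑ j, A i j ^ 2 - 2 * α * (∑ i, ∑ j, A i j * (f i * g j))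
        - 2 * α * (∑ i, ∑ j, A i j * (g i * f j)) + 2 * β * (∑ i, ∑ j, A i j * (f i * f j))
        + α ^ 2 * (∑ i, ∑ j, f i ^ 2 * g j ^ 2) + α ^ 2 * (∑ i, ∑ j, g i ^ 2 * f j ^ 2)
        + 2 * α ^ 2 * (∑ i, ∑ j, (f i * g i) * (f j * g j))
        - 2 * α * β * (∑ i, ∑ j, f i ^ 2 * (f j * g j))
        - 2 * α * β * (∑ i, ∑ j, (f i * g i) * f j ^ 2)
        + β ^ 2 * (∑ i, ∑ j, f i ^ 2 * f j ^ 2) := by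
      simp only [Finset.mul_sum, ← Finset.sum_add_distrib, ← Finset.sum_sub_distrib]
      refine Finset.sum_congr rfl fun i _ => Finset.sum_congr rfl fun j _ => ?_
      ring
    rw [this, e1, e2, e3, e4, e5, e6, e7, e8, e9] at h0
    linarith
  have h := hsq (1 / q) (k / q ^ 2)
  have hq1 : 1 ≤ q := by linarith
  have hs' : s = q - 1 := by linarith
  rw [hs'] at h hCS
  set N := ∑ i, ∑ j, A i j ^ 2
  have hq4 : 0 < q ^ 4 := by positivity
  have e : N - 4 * (1 / q) * G + 2 * (k / q ^ 2) * k
      + 2 * (1 / q) ^ 2 * ((q - 1) * G + k ^ 2) - 4 * (1 / q) * (k / q ^ 2) * (q - 1) * k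
      + (k / q ^ 2) ^ 2 * (q - 1) ^ 2
      = (N - 2 * G / q + k ^ 2 / q ^ 2) - (2 * G * q ^ 2 - k ^ 2 * (2 * q + 1)) / q ^ 4 := by
    field_simp
    ring
  rw [e] at h
  have h2 : 0 ≤ 2 * G * q ^ 2 - k ^ 2 * (2 * q + 1) := by
    nlinarith [mul_le_mul_of_nonneg_right hCS (by linarith : 0 ≤ 2 * q + 1),
      mul_nonneg hG0 (by linarith : 0 ≤ q)]
  have := div_nonneg h2 hq4.le
  linarith
end pde

section maxpr
variable {n : ℕ} {Ω : Set (ℝ × EuclideanSpace ℝ (Fin n))}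
  {F : ℝ × EuclideanSpace ℝ (Fin n) → ℝ} {p : ℝ × EuclideanSpace ℝ (Fin n)}

theorem trace_test' (hΩ : IsOpen Ω) {G : ℝ × EuclideanSpace ℝ (Fin n) → ℝ} (hG : Sm Ω G)
    (hp : p ∈ Ω) (hm : ∀ᶠ q in nhds p, q.1 ≤ p.1 → G q ≤ G p) :
    ∑ i, dd (ei i) (dd (ei i) G) p
      - dd (∑ i, dd (ei i) F p • ei i) (dd (∑ i, dd (ei i) F p • ei i) G) p / QQ F p ≤ 0 := by
  have h := trace_test hΩ hG hp hm (fun i => dd (ei i) F p)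
  have : 1 + ∑ i : Fin n, dd (ei i) F p ^ 2 = QQ F p := by
    simp only [QQ, sq]
  rw [this] at h; exact h

theorem no_max_phi (hΩ : IsOpen Ω) (hF : Sm Ω F) (hpde : PDE Ω F) (hp : p ∈ Ω) (R x₀ h c t₀)
    (hc : 2 * (n : ℝ) < c)
    (hm : ∀ᶠ q in nhds p, q.1 ≤ p.1 → phi F R x₀ h c t₀ q ≤ phi F R x₀ h c t₀ p) : False := by
  have h1 := max_test_time hΩ (hF.phi R x₀ h c t₀) hp hm
  have h2 := trace_test' (F := F) hΩ (hF.phi R x₀ h c t₀) hp hm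
  rw [phi_evol hΩ hF hpde hp] at h1
  linarith

theorem no_max_G (hΩ : IsOpen Ω) (hF : Sm Ω F) (hpde : PDE Ω F) (hp : p ∈ Ω) (R x₀ h c t₀)
    (hc : 2 * (n : ℝ) < c) (hpos : 0 < phi F R x₀ h c t₀ p)
    (hm : ∀ᶠ q in nhds p, q.1 ≤ p.1 →
      QQ F q * (phi F R x₀ h c t₀ q * phi F R x₀ h c t₀ q) ≤
        QQ F p * (phi F R x₀ h c t₀ p * phi F R x₀ h c t₀ p)) : False := by
  set φ := phi F R x₀ h c t₀ with hφ
  have sφ : Sm Ω φ := hF.phi R x₀ h c t₀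
  have sQ : Sm Ω (QQ F) := hF.QQ hΩ
  have sφφ := sφ.mul sφ
  have sG := sQ.mul sφφ
  have h1 := max_test_time hΩ sG hp hm
  have h2 := trace_test' (F := F) hΩ sG hp hm
  have hq : 1 ≤ QQ F p := QQ_pos F p
  have eφ := phi_evol hΩ hF hpde hp R x₀ h c t₀
  rw [← hφ] at eφ
  have eQ := QQ_evol hΩ hF hpde hp
  have hgrad : ∀ v : EuclideanSpace ℝ (Fin n), φ p * dd (0, v) (QQ F) p
      = -2 * QQ F p * dd (0, v) φ p := by
    intro v
    have := (max_test_space hΩ sG hp hm v).1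
    rw [dd_mul (sQ.diff hΩ hp) (sφφ.diff hΩ hp), dd_mul (sφ.diff hΩ hp) (sφ.diff hΩ hp)] at this
    apply mul_left_cancel₀ hpos.ne'
    linarith
  set q := QQ F p with hqd
  have h2d : ∀ v : EuclideanSpace ℝ (Fin n),
      dd (0, v) (dd (0, v) (fun p => QQ F p * (φ p * φ p))) p
      = 2 * q * φ p * dd (0, v) (dd (0, v) φ) p + φ p ^ 2 * dd (0, v) (dd (0, v) (QQ F)) p
        - 3 / 2 * φ p ^ 2 / q * dd (0, v) (QQ F) p ^ 2 := by
    intro v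
    rw [dd2_mul hΩ sQ sφφ hp, dd2_mul hΩ sφ sφ hp, dd_mul (sφ.diff hΩ hp) (sφ.diff hΩ hp), ← hqd]
    have e := hgrad v
    have e2 : dd (0, v) φ p = - (φ p * dd (0, v) (QQ F) p) / (2 * q) := by
      rw [e]; field_simp
    rw [e2]; field_simp; ring
  set P : ℝ × EuclideanSpace ℝ (Fin n) := ∑ i, dd (ei i) F p • ei i with hP
  have hP2 : P = (0, P.2) := by
    ext1
    · simp [hP, ei, Prod.fst_sum]
    · rfl
  have hPd := h2d P.2
  rw [← hP2] at hPd
  have hKP : dd P (QQ F) p = ∑ i, dd (ei i) F p * dd (ei i) (QQ F) p := by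
    rw [hP, dd_lin_sum]
  have hid : ∀ i : Fin n, dd (ei i) (dd (ei i) (fun p => QQ F p * (φ p * φ p))) p
      = 2 * q * φ p * dd (ei i) (dd (ei i) φ) p + φ p ^ 2 * dd (ei i) (dd (ei i) (QQ F)) p
        - 3 / 2 * φ p ^ 2 / q * dd (ei i) (QQ F) p ^ 2 := fun i => h2d _
  have hsum : ∑ i, dd (ei i) (dd (ei i) (fun p => QQ F p * (φ p * φ p))) p
      = 2 * q * φ p * ∑ i, dd (ei i) (dd (ei i) φ) p + φ p ^ 2 * ∑ i, dd (ei i) (dd (ei i) (QQ F)) p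
        - 3 / 2 * φ p ^ 2 / q * ∑ i, dd (ei i) (QQ F) p ^ 2 := by
    simp only [Finset.mul_sum, ← Finset.sum_add_distrib, ← Finset.sum_sub_distrib]
    exact Finset.sum_congr rfl fun i _ => hid i
  rw [dd_mul (sQ.diff hΩ hp) (sφφ.diff hΩ hp), dd_mul (sφ.diff hΩ hp) (sφ.diff hΩ hp), eφ, eQ,
    ← hqd] at h1
  rw [hsum, hPd, hKP] at h2
  -- algebra
  have halg := alg_ineq (fun i => dd (ei i) F p) (fun i => dd (ei i) (QQ F) p / 2)
    (fun i j => dd (ei i) (dd (ei j) F) p) q (by simp only [hqd, QQ, sq])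
    (fun i j => dd_comm hΩ hF hp _ _) (fun i => by rw [dd_QQ hΩ hF hp]; ring)
  have g1 : ∑ i : Fin n, (dd (ei i) (QQ F) p / 2) ^ 2 = (∑ i, dd (ei i) (QQ F) p ^ 2) / 4 := by
    rw [Finset.sum_div]; exact Finset.sum_congr rfl fun i _ => by ring
  have g2 : ∑ i : Fin n, dd (ei i) F p * (dd (ei i) (QQ F) p / 2)
      = (∑ i, dd (ei i) F p * dd (ei i) (QQ F) p) / 2 := by
    rw [Finset.sum_div]; exact Finset.sum_congr rfl fun i _ => by ring
  rw [g1, g2] at halg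
  generalize (∑ i, dd (ei i) F p * dd (ei i) (QQ F) p) = K at *
  generalize (∑ i, dd (ei i) (QQ F) p ^ 2) = S at *
  generalize (∑ i, ∑ j, dd (ei i) (dd (ei j) F) p ^ 2) = N at *
  generalize (∑ i, dd (ei i) (dd (ei i) (QQ F)) p) = LQ at *
  generalize (∑ i, dd (ei i) (dd (ei i) φ) p) = Lφ at *
  generalize dd P (dd P (QQ F)) p = PQ at *
  generalize dd P (dd P φ) p = Pφ at *
  generalize φ p = y at *
  have key : (q * (y * (Lφ - Pφ / q + (2 * n - c)) + y * (Lφ - Pφ / q + (2 * n - c)))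
      + y * y * (LQ - PQ / q - 2 * N - S / (2 * q) + K ^ 2 / q ^ 2))
      - (2 * q * y * Lφ + y ^ 2 * LQ - 3 / 2 * y ^ 2 / q * S
        - (2 * q * y * Pφ + y ^ 2 * PQ - 3 / 2 * y ^ 2 / q * K ^ 2) / q)
      = 2 * q * y * (2 * n - c) - 2 * y ^ 2 * (N - 2 * (S / 4) / q + (K / 2) ^ 2 / q ^ 2) := by
    field_simp
    ring
  have k1 : 2 * q * y * (2 * n - c) < 0 := mul_neg_of_pos_of_neg (by positivity) (by linarith)
  have k2 := mul_nonneg (by positivity : 0 ≤ 2 * y ^ 2) halg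
  linarith
end maxpr

section main
variable {n : ℕ} {t₀ τ ρ : ℝ} {a₀ : EuclideanSpace ℝ (Fin n)}
  {f : ℝ → EuclideanSpace ℝ (Fin n) → ℝ}

theorem slice_fderiv {H : ℝ × EuclideanSpace ℝ (Fin n) → ℝ} {t : ℝ} {x : EuclideanSpace ℝ (Fin n)}
    (hH : DifferentiableAt ℝ H (t, x)) (v : EuclideanSpace ℝ (Fin n)) :
    fderiv ℝ (fun y => H (t, y)) x v = dd (0, v) H (t, x) := by
  have h := hH.hasFDerivAt.comp x (hasFDerivAt_prodMk_right t x)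
  have h' : HasFDerivAt (fun y => H (t, y)) _ x := h
  rw [h'.fderiv]; simp [dd]

theorem slice_deriv {H : ℝ × EuclideanSpace ℝ (Fin n) → ℝ} {t : ℝ} {x : EuclideanSpace ℝ (Fin n)}
    (hH : DifferentiableAt ℝ H (t, x)) :
    deriv (fun s => H (s, x)) t = dd (et n) H (t, x) := by
  have h := hH.hasFDerivAt.comp t (hasFDerivAt_prodMk_left (𝕜 := ℝ) t x)
  have h' : HasFDerivAt (fun s => H (s, x)) _ t := h
  rw [h'.hasDerivAt.deriv]; simp [dd, et]

theorem gmcf_sm (hf : IsGMCF (Set.Ico t₀ (t₀ + τ)) (Metric.ball a₀ ρ) f) :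
    Sm (Set.Ioo t₀ (t₀ + τ) ×ˢ Metric.ball a₀ ρ) (fun p => f p.1 p.2) :=
  hf.1.mono (Set.prod_mono Set.Ioo_subset_Ico_self subset_rfl)

theorem gmcf_open : IsOpen (Set.Ioo t₀ (t₀ + τ) ×ˢ Metric.ball a₀ ρ) :=
  isOpen_Ioo.prod Metric.isOpen_ball

theorem gmcf_pd (hf : IsGMCF (Set.Ico t₀ (t₀ + τ)) (Metric.ball a₀ ρ) f)
    {p : ℝ × EuclideanSpace ℝ (Fin n)} (hp : p ∈ Set.Ioo t₀ (t₀ + τ) ×ˢ Metric.ball a₀ ρ) (i) :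
    pd (f p.1) p.2 i = dd (ei i) (fun p => f p.1 p.2) p :=
  slice_fderiv (H := fun p => f p.1 p.2) ((gmcf_sm hf).diff gmcf_open hp) _

theorem gmcf_Q (hf : IsGMCF (Set.Ico t₀ (t₀ + τ)) (Metric.ball a₀ ρ) f)
    {p : ℝ × EuclideanSpace ℝ (Fin n)} (hp : p ∈ Set.Ioo t₀ (t₀ + τ) ×ˢ Metric.ball a₀ ρ) :
    1 + gradNormSq (f p.1) p.2 = QQ (fun p => f p.1 p.2) p := by
  simp only [gradNormSq, QQ, gmcf_pd hf hp, sq]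

theorem gmcf_pde (hf : IsGMCF (Set.Ico t₀ (t₀ + τ)) (Metric.ball a₀ ρ) f) :
    PDE (Set.Ioo t₀ (t₀ + τ) ×ˢ Metric.ball a₀ ρ) (fun p => f p.1 p.2) := by
  intro p hp
  set Ω := Set.Ioo t₀ (t₀ + τ) ×ˢ Metric.ball a₀ ρ with hΩd
  have hΩ : IsOpen Ω := gmcf_open
  have hF : Sm Ω (fun p => f p.1 p.2) := gmcf_sm hf
  set F : ℝ × EuclideanSpace ℝ (Fin n) → ℝ := fun p => f p.1 p.2 with hFd
  have e1 : dd (et n) F p = mcfRHS (f p.1) p.2 := by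
    rw [← hf.2 p.1 (Set.Ioo_subset_Ico_self hp.1) p.2 hp.2]
    exact (slice_deriv (H := F) (hF.diff hΩ hp)).symm
  have e2 : ∀ i j, pd2 (f p.1) p.2 i j = dd (ei i) (dd (ei j) F) p := by
    intro i j
    have : (fun y => pd (f p.1) y j) =ᶠ[nhds p.2] fun y => dd (ei j) F (p.1, y) := by
      filter_upwards [Metric.isOpen_ball.mem_nhds hp.2] with y hy
      exact gmcf_pd hf (p := (p.1, y)) ⟨hp.1, hy⟩ j
    unfold pd2
    rw [this.fderiv_eq]
    exact slice_fderiv (H := dd (ei j) F) ((hF.dd hΩ _).diff hΩ hp) _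
  have hq : 1 ≤ QQ F p := QQ_pos F p
  rw [e1]
  unfold mcfRHS
  simp_rw [e2, gmcf_Q hf hp, gmcf_pd hf hp, dd_QQ hΩ hF hp]
  simp only [← hFd]
  rw [Finset.sum_div, ← Finset.sum_sub_distrib]
  refine Finset.sum_congr rfl fun i _ => ?_
  simp_rw [sub_mul, ite_mul, one_mul, zero_mul]
  rw [Finset.sum_sub_distrib, Finset.sum_ite_eq]
  simp only [Finset.mem_univ, if_true, Finset.mul_sum, Finset.sum_div]
  congr 1
  refine Finset.sum_congr rfl fun j _ => ?_
  field_simp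

theorem gmcf_contQ (hτ : 0 < τ) (hf : IsGMCF (Set.Ico t₀ (t₀ + τ)) (Metric.ball a₀ ρ) f) :
    ContinuousOn (fun p : ℝ × EuclideanSpace ℝ (Fin n) => 1 + gradNormSq (f p.1) p.2)
      (Set.Ico t₀ (t₀ + τ) ×ˢ Metric.ball a₀ ρ) := by
  have hU : UniqueDiffOn ℝ (Set.Ico t₀ (t₀ + τ) ×ˢ Metric.ball a₀ ρ) :=
    (uniqueDiffOn_Ico _ _).prod Metric.isOpen_ball.uniqueDiffOn
  have hc := hf.1.continuousOn_fderivWithin hU (by simp)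
  have hpd : ∀ p ∈ Set.Ico t₀ (t₀ + τ) ×ˢ Metric.ball a₀ ρ, ∀ i, pd (f p.1) p.2 i =
      fderivWithin ℝ (fun p : ℝ × EuclideanSpace ℝ (Fin n) => f p.1 p.2)
        (Set.Ico t₀ (t₀ + τ) ×ˢ Metric.ball a₀ ρ) p (ei i) := by
    intro p hp i
    have h1 := ((hf.1 p hp).differentiableWithinAt (by simp)).hasFDerivWithinAt
    have h2 : HasFDerivWithinAt (fun y : EuclideanSpace ℝ (Fin n) => (p.1, y)) _
      (Metric.ball a₀ ρ) p.2 := (hasFDerivAt_prodMk_right (𝕜 := ℝ) p.1 p.2).hasFDerivWithinAt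
    have h3 := HasFDerivWithinAt.comp (t := Set.Ico t₀ (t₀ + τ) ×ˢ Metric.ball a₀ ρ) p.2 h1 h2
      (fun y hy => ⟨hp.1, hy⟩)
    have h4 := h3.hasFDerivAt (Metric.isOpen_ball.mem_nhds hp.2)
    have h5 : HasFDerivAt (f p.1) _ p.2 := h4
    unfold pd
    rw [h5.fderiv]; simp [ei]
  refine ContinuousOn.congr (f := fun p => 1 + ∑ i, (fderivWithin ℝ
    (fun p : ℝ × EuclideanSpace ℝ (Fin n) => f p.1 p.2)
        (Set.Ico t₀ (t₀ + τ) ×ˢ Metric.ball a₀ ρ) p (ei i)) ^ 2) ?_ ?_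
  · refine continuousOn_const.add (continuousOn_finsetSum _ fun i _ => ?_)
    exact (hc.clm_apply continuousOn_const).pow 2
  · intro p hp
    simp only [gradNormSq]
    congr 1
    exact Finset.sum_congr rfl fun i _ => by rw [hpd p hp]

theorem cyl_max (hf : IsGMCF (Set.Ico t₀ (t₀ + τ)) (Metric.ball a₀ ρ) f)
    {t₁ R : ℝ} {x₀ : EuclideanSpace ℝ (Fin n)} (ht₁ : t₁ < t₀ + τ)
    (hR : Metric.closedBall x₀ R ⊆ Metric.ball a₀ ρ) (hR0 : 0 ≤ R) (h c : ℝ) (hc : 0 ≤ c)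
    {W : ℝ × EuclideanSpace ℝ (Fin n) → ℝ}
    (hW : ContinuousOn W (Set.Ico t₀ (t₀ + τ) ×ˢ Metric.ball a₀ ρ))
    {z : ℝ × EuclideanSpace ℝ (Fin n)} (hz : z ∈ Set.Icc t₀ t₁ ×ˢ Metric.closedBall x₀ R)
    (hz0 : 0 < phi (fun p => f p.1 p.2) R x₀ h c t₀ z) :
    ∃ p ∈ Set.Icc t₀ t₁ ×ˢ Metric.closedBall x₀ R, W z ≤ W p ∧
      (phi (fun p => f p.1 p.2) R x₀ h c t₀ p = 0 ∨
        (0 < phi (fun p => f p.1 p.2) R x₀ h c t₀ p ∧ (p.1 = t₀ ∨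
        (p ∈ Set.Ioo t₀ (t₀ + τ) ×ˢ Metric.ball a₀ ρ ∧
        ∀ᶠ q in nhds p, q.1 ≤ p.1 → W q ≤ W p)))) := by
  set F : ℝ × EuclideanSpace ℝ (Fin n) → ℝ := fun p => f p.1 p.2 with hFd
  set φ := phi F R x₀ h c t₀ with hφ
  set D := Set.Ico t₀ (t₀ + τ) ×ˢ Metric.ball a₀ ρ with hD
  set K := Set.Icc t₀ t₁ ×ˢ Metric.closedBall x₀ R with hK
  have hKD : K ⊆ D := by
    rintro p ⟨h1, h2⟩
    exact ⟨⟨h1.1, h1.2.trans_lt ht₁⟩, hR h2⟩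
  have hFc : ContinuousOn F D := hf.1.continuousOn
  have hφc : ContinuousOn φ D := by
    rw [hφ]; unfold phi
    have e1 : Continuous fun p : ℝ × EuclideanSpace ℝ (Fin n) => R ^ 2 - ‖p.2 - x₀‖ ^ 2 := by
      fun_prop
    have e2 : Continuous fun p : ℝ × EuclideanSpace ℝ (Fin n) => c * (p.1 - t₀) := by
      fun_prop
    exact (e1.continuousOn.sub ((hFc.sub continuousOn_const).mul
      (hFc.sub continuousOn_const))).sub e2.continuousOn
  have hKc : IsCompact K := isCompact_Icc.prod (isCompact_closedBall _ _)
  set K' := K ∩ φ ⁻¹' (Set.Ici 0) with hK'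
  have hK'c : IsCompact K' :=
    hKc.of_isClosed_subset
      ((hφc.mono hKD).preimage_isClosed_of_isClosed hKc.isClosed isClosed_Ici)
      Set.inter_subset_left
  have hzK' : z ∈ K' := ⟨hz, hz0.le⟩
  obtain ⟨p, hpK', hpm⟩ := hK'c.exists_isMaxOn ⟨z, hzK'⟩
    (hW.mono (Set.inter_subset_left.trans hKD))
  refine ⟨p, hpK'.1, hpm hzK', ?_⟩
  have h0 : 0 ≤ φ p := hpK'.2
  rcases h0.eq_or_lt with h0 | h0
  · exact Or.inl h0.symm
  refine Or.inr ⟨h0, ?_⟩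
  have hpt := hpK'.1.1
  rcases hpt.1.eq_or_lt with h1 | h1
  · exact Or.inl h1.symm
  refine Or.inr ⟨⟨⟨h1, hpt.2.trans_lt ht₁⟩, hR hpK'.1.2⟩, ?_⟩
  have hpΩ : p ∈ Set.Ioo t₀ (t₀ + τ) ×ˢ Metric.ball a₀ ρ :=
    ⟨⟨h1, hpt.2.trans_lt ht₁⟩, hR hpK'.1.2⟩
  have hpD : D ∈ nhds p := Filter.mem_of_superset (gmcf_open.mem_nhds hpΩ)
    (Set.prod_mono Set.Ioo_subset_Ico_self subset_rfl)
  have hev : ∀ᶠ q in nhds p, 0 < φ q :=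
    (hφc.continuousAt hpD).eventually (lt_mem_nhds h0)
  have hnear : ‖p.2 - x₀‖ < R := by
    have hh : φ p = R ^ 2 - ‖p.2 - x₀‖ ^ 2 - (F p - h) * (F p - h) - c * (p.1 - t₀) := rfl
    have a1 : 0 ≤ c * (p.1 - t₀) := mul_nonneg hc (by linarith)
    have a2 := mul_self_nonneg (F p - h)
    exact lt_of_pow_lt_pow_left₀ 2 hR0 (by linarith)
  have hev2 : ∀ᶠ q : ℝ × EuclideanSpace ℝ (Fin n) in nhds p, ‖q.2 - x₀‖ < R := by
    have : ContinuousAt (fun q : ℝ × EuclideanSpace ℝ (Fin n) => ‖q.2 - x₀‖) p := by fun_prop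
    exact this.eventually (gt_mem_nhds hnear)
  have hev3 : ∀ᶠ q : ℝ × EuclideanSpace ℝ (Fin n) in nhds p, t₀ < q.1 :=
    continuousAt_fst.eventually (lt_mem_nhds h1)
  filter_upwards [hev, hev2, hev3] with q q1 q2 q3 q4
  refine hpm ⟨⟨⟨q3.le, q4.trans hpt.2⟩, ?_⟩, q1.le⟩
  rw [Metric.mem_closedBall, dist_eq_norm]; exact q2.le

theorem height_aux (hf : IsGMCF (Set.Ico t₀ (t₀ + τ)) (Metric.ball a₀ ρ) f)
    {t₁ R : ℝ} {x₀ : EuclideanSpace ℝ (Fin n)} (ht₁ : t₁ < t₀ + τ)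
    (hR : Metric.closedBall x₀ R ⊆ Metric.ball a₀ ρ) (hR0 : 0 ≤ R) (h c : ℝ)
    (hc : 2 * (n : ℝ) < c) (h0 : ∀ x ∈ Metric.ball a₀ ρ, R ^ 2 ≤ (f t₀ x - h) * (f t₀ x - h))
    (z : ℝ × EuclideanSpace ℝ (Fin n)) (hz : z ∈ Set.Icc t₀ t₁ ×ˢ Metric.closedBall x₀ R) :
    phi (fun p => f p.1 p.2) R x₀ h c t₀ z ≤ 0 := by
  by_contra! hz0
  have hΩ : IsOpen (Set.Ioo t₀ (t₀ + τ) ×ˢ Metric.ball a₀ ρ) := gmcf_open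
  have hFc : ContinuousOn (fun p : ℝ × EuclideanSpace ℝ (Fin n) => f p.1 p.2)
    (Set.Ico t₀ (t₀ + τ) ×ˢ Metric.ball a₀ ρ) := hf.1.continuousOn
  have hφc : ContinuousOn (phi (fun p => f p.1 p.2) R x₀ h c t₀)
      (Set.Ico t₀ (t₀ + τ) ×ˢ Metric.ball a₀ ρ) := by
    unfold phi
    have e1 : Continuous fun p : ℝ × EuclideanSpace ℝ (Fin n) => R ^ 2 - ‖p.2 - x₀‖ ^ 2 := by
      fun_prop
    have e2 : Continuous fun p : ℝ × EuclideanSpace ℝ (Fin n) => c * (p.1 - t₀) := by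
      fun_prop
    exact (e1.continuousOn.sub ((hFc.sub continuousOn_const).mul
      (hFc.sub continuousOn_const))).sub e2.continuousOn
  have hn0 : (0:ℝ) ≤ n := Nat.cast_nonneg n
  obtain ⟨p, hpK, hzp, hp⟩ := cyl_max hf ht₁ hR hR0 h c (by linarith) hφc hz hz0
  rcases hp with hp | ⟨hp, hp' | ⟨hp', hm⟩⟩
  · linarith
  · have hh : phi (fun p => f p.1 p.2) R x₀ h c t₀ p
      = R ^ 2 - ‖p.2 - x₀‖ ^ 2 - (f p.1 p.2 - h) * (f p.1 p.2 - h) - c * (p.1 - t₀) := rfl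
    have := h0 p.2 (hR hpK.2)
    rw [hp'] at hh
    nlinarith [sq_nonneg ‖p.2 - x₀‖]
  · exact no_max_phi hΩ (gmcf_sm hf) (gmcf_pde hf) hp' R x₀ h c t₀ hc hm

theorem grad_aux (hτ : 0 < τ) (hf : IsGMCF (Set.Ico t₀ (t₀ + τ)) (Metric.ball a₀ ρ) f)
    {t₁ R L : ℝ} {x₀ : EuclideanSpace ℝ (Fin n)} (ht₁ : t₁ < t₀ + τ)
    (hR : Metric.closedBall x₀ R ⊆ Metric.ball a₀ ρ) (hR0 : 0 ≤ R) (h c : ℝ)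
    (hc : 2 * (n : ℝ) < c) (h0 : ∀ x ∈ Metric.ball a₀ ρ, gradNormSq (f t₀) x ≤ L ^ 2)
    (z : ℝ × EuclideanSpace ℝ (Fin n)) (hz : z ∈ Set.Icc t₀ t₁ ×ˢ Metric.closedBall x₀ R)
    (hz0 : 0 < phi (fun p => f p.1 p.2) R x₀ h c t₀ z) :
    (1 + gradNormSq (f z.1) z.2) * (phi (fun p => f p.1 p.2) R x₀ h c t₀ z *
      phi (fun p => f p.1 p.2) R x₀ h c t₀ z) ≤ (1 + L ^ 2) * (R ^ 2 * R ^ 2) := by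
  have hΩ : IsOpen (Set.Ioo t₀ (t₀ + τ) ×ˢ Metric.ball a₀ ρ) := gmcf_open
  have hFc : ContinuousOn (fun p : ℝ × EuclideanSpace ℝ (Fin n) => f p.1 p.2)
    (Set.Ico t₀ (t₀ + τ) ×ˢ Metric.ball a₀ ρ) := hf.1.continuousOn
  have hφc : ContinuousOn (phi (fun p => f p.1 p.2) R x₀ h c t₀)
      (Set.Ico t₀ (t₀ + τ) ×ˢ Metric.ball a₀ ρ) := by
    unfold phi
    have e1 : Continuous fun p : ℝ × EuclideanSpace ℝ (Fin n) => R ^ 2 - ‖p.2 - x₀‖ ^ 2 := by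
      fun_prop
    have e2 : Continuous fun p : ℝ × EuclideanSpace ℝ (Fin n) => c * (p.1 - t₀) := by
      fun_prop
    exact (e1.continuousOn.sub ((hFc.sub continuousOn_const).mul
      (hFc.sub continuousOn_const))).sub e2.continuousOn
  have hn0 : (0:ℝ) ≤ n := Nat.cast_nonneg n
  obtain ⟨p, hpK, hzp, hp⟩ := cyl_max hf ht₁ hR hR0 h c (by linarith)
    ((gmcf_contQ hτ hf).mul (hφc.mul hφc)) hz hz0
  refine hzp.trans ?_
  rcases hp with hp | ⟨hp, hp' | ⟨hp', hm⟩⟩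
  · simp only [Pi.mul_apply]
    rw [hp]; simp only [mul_zero]; positivity
  · have hh : phi (fun p => f p.1 p.2) R x₀ h c t₀ p
      = R ^ 2 - ‖p.2 - x₀‖ ^ 2 - (f p.1 p.2 - h) * (f p.1 p.2 - h) - c * (p.1 - t₀) := rfl
    have := h0 p.2 (hR hpK.2)
    have hle : phi (fun p => f p.1 p.2) R x₀ h c t₀ p ≤ R ^ 2 := by
      rw [hh, hp']
      nlinarith [sq_nonneg ‖p.2 - x₀‖, mul_self_nonneg (f t₀ p.2 - h)]
    simp only [Pi.mul_apply]
    rw [hp']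
    gcongr
  · exfalso
    refine no_max_G hΩ (gmcf_sm hf) (gmcf_pde hf) hp' R x₀ h c t₀ hc hp ?_
    filter_upwards [hm, hΩ.mem_nhds hp'] with q hq hqΩ hle
    have := hq hle
    rw [← gmcf_Q hf hp', ← gmcf_Q hf hqΩ]
    exact this
end main

/-- **Staying graphical** (graphical case of Theorem `stayinggraphicalthm`).
For every `L ≥ 1` there is `Λ > 1` such that: if `f` is a graphical mean curvature flow on
`[t₀,t₀+τ) × Bⁿ(a₀,ρ)` with `|f| < Γ`, `sup |f(t₀,·)| ≤ Γ − 2δρ` and `sup |Df(t₀,·)| ≤ L`,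
then for every `t ∈ (t₀,t₀+τ)` with `Λ√(t−t₀) < δρ` and every
`x ∈ Bⁿ(a₀, ρ − Λ√(t−t₀))` one has `|f(t,x)| ≤ sup |f(t₀,·)| + Λ√(t−t₀)` and
`|Df(t,x)| ≤ 4L`. -/
theorem stayinggraphicalthm (n : ℕ) (hn : 1 ≤ n) (L : ℝ) (hL : 1 ≤ L) :
    ∃ Λ : ℝ, 1 < Λ ∧
      ∀ (ρ Γ τ : ℝ), 0 < ρ → 0 < Γ → 0 < τ →
      ∀ δ ∈ Set.Ioc (0 : ℝ) 1, ∀ (t₀ : ℝ) (a₀ : EuclideanSpace ℝ (Fin n))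
        (f : ℝ → EuclideanSpace ℝ (Fin n) → ℝ),
        IsGMCF (Set.Ico t₀ (t₀ + τ)) (Metric.ball a₀ ρ) f →
        (∀ t ∈ Set.Ico t₀ (t₀ + τ), ∀ x ∈ Metric.ball a₀ ρ, |f t x| < Γ) →
        (∀ x ∈ Metric.ball a₀ ρ, |f t₀ x| ≤ Γ - 2 * δ * ρ) →
        (∀ x ∈ Metric.ball a₀ ρ, gradNorm (f t₀) x ≤ L) →
        ∀ t ∈ Set.Ioo t₀ (t₀ + τ), Λ * Real.sqrt (t - t₀) < δ * ρ →
        ∀ x ∈ Metric.ball a₀ (ρ - Λ * Real.sqrt (t - t₀)),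
          |f t x| ≤ sSup ((fun y => |f t₀ y|) '' Metric.ball a₀ ρ) + Λ * Real.sqrt (t - t₀) ∧
          gradNorm (f t) x ≤ 4 * L := by
  have hn0 : (0:ℝ) ≤ n := Nat.cast_nonneg n
  have hn1 : (1:ℝ) ≤ n := by exact_mod_cast hn
  refine ⟨4 * n + 2, by linarith, ?_⟩
  intro ρ Γ τ hρ hΓ hτ δ hδ t₀ a₀ f hf hbd hinit hgrad t ht hsmall x hx
  set Λ : ℝ := 4 * n + 2 with hΛ
  set R := Λ * Real.sqrt (t - t₀) with hR
  have hs : 0 < t - t₀ := by linarith [ht.1]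
  have hsq : 0 < Real.sqrt (t - t₀) := Real.sqrt_pos.2 hs
  have hRpos : 0 < R := by positivity
  have hR2 : R ^ 2 = Λ ^ 2 * (t - t₀) := by
    rw [hR, mul_pow, Real.sq_sqrt hs.le]
  have hsub : Metric.closedBall x R ⊆ Metric.ball a₀ ρ := by
    apply Metric.closedBall_subset_ball'
    have : dist x a₀ < ρ - R := hx
    linarith
  have hxB : x ∈ Metric.ball a₀ ρ := hsub (Metric.mem_closedBall_self hRpos.le)
  have hphix : ∀ h s, phi (fun p => f p.1 p.2) R x h (2 * n + 1) t₀ (s, x)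
      = R ^ 2 - (f s x - h) * (f s x - h) - (2 * n + 1) * (s - t₀) := by
    intro h s; simp [phi]
  have hΛ2 : 2 * (2 * (n:ℝ) + 1) ≤ Λ ^ 2 := by rw [hΛ]; nlinarith
  constructor
  · set M := sSup ((fun y => |f t₀ y|) '' Metric.ball a₀ ρ) with hM
    have hMle : ∀ y ∈ Metric.ball a₀ ρ, |f t₀ y| ≤ M := by
      intro y hy
      refine le_csSup ⟨Γ - 2 * δ * ρ, ?_⟩ ⟨y, hy, rfl⟩
      rintro _ ⟨y, hy, rfl⟩
      exact hinit y hy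
    have hcont : ContinuousOn (fun s => f s x) (Set.Icc t₀ t) := by
      have h1 := hf.1.continuousOn
      exact h1.comp (f := fun s : ℝ => (s, x)) (by fun_prop)
        (fun s hs => ⟨⟨hs.1, hs.2.trans_lt ht.2⟩, hxB⟩)
    have hne : ∀ h, |h| = M + R → ∀ s ∈ Set.Icc t₀ t, f s x ≠ h := by
      intro h hh s hs' heq
      have := height_aux hf ht.2 hsub hRpos.le h (2 * n + 1) (by linarith) (fun y hy => by
        have h1 := hMle y hy
        have h2 : R ≤ |f t₀ y - h| := by
          have := abs_sub_abs_le_abs_sub h (f t₀ y)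
          rw [abs_sub_comm] at this
          linarith
        rw [← abs_mul_abs_self (f t₀ y - h), ← sq]
        gcongr) (s, x) ⟨hs', Metric.mem_closedBall_self hRpos.le⟩
      rw [hphix, heq] at this
      have h3 : (2 * (n:ℝ) + 1) * (s - t₀) ≤ (2 * (n:ℝ) + 1) * (t - t₀) := by
        have := hs'.2
        gcongr
      nlinarith
    have hM0 : 0 ≤ M := (abs_nonneg _).trans (hMle x hxB)
    have hx0 := abs_le.1 (hMle x hxB)
    have hMR : 0 ≤ M + R := by linarith
    rw [abs_le]
    constructor
    · by_contra! hlt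
      obtain ⟨s, hs', he⟩ := intermediate_value_Icc' ht.1.le hcont
        (show -(M + R) ∈ Set.Icc (f t x) (f t₀ x) from ⟨hlt.le, by linarith⟩)
      exact hne _ (by rw [abs_neg, abs_of_nonneg hMR]) s hs' he
    · by_contra! hlt
      obtain ⟨s, hs', he⟩ := intermediate_value_Icc ht.1.le hcont
        (show M + R ∈ Set.Icc (f t₀ x) (f t x) from ⟨by linarith, hlt.le⟩)
      exact hne _ (abs_of_nonneg hMR) s hs' he
  · have hval := hphix (f t x) t
    rw [hR2] at hval
    have hge : R ^ 2 / 2 ≤ phi (fun p => f p.1 p.2) R x (f t x) (2 * n + 1) t₀ (t, x) := by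
      rw [hval, hR2]; nlinarith
    have hR2pos : 0 < R ^ 2 := by positivity
    have hg := grad_aux hτ hf (L := L) ht.2 hsub hRpos.le (f t x) (2 * n + 1) (by linarith)
      (fun y hy => by
        have := hgrad y hy
        unfold gradNorm at this
        exact (Real.sqrt_le_left (by linarith)).1 this) (t, x)
      ⟨⟨ht.1.le, le_rfl⟩, Metric.mem_closedBall_self hRpos.le⟩ (by linarith)
    simp only at hg
    have hns : 0 ≤ gradNormSq (f t) x := Finset.sum_nonneg fun i _ => sq_nonneg _
    set y := phi (fun p => f p.1 p.2) R x (f t x) (2 * n + 1) t₀ (t, x)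
    have h1 : (1 + gradNormSq (f t) x) * (R ^ 2 / 2 * (R ^ 2 / 2)) ≤ (1 + L ^ 2) * (R ^ 2 * R ^ 2) := by
      refine le_trans ?_ hg
      have hy0 : 0 ≤ y := by linarith
      gcongr
    have h2 : 1 + gradNormSq (f t) x ≤ 4 * (1 + L ^ 2) := by
      have : 0 < R ^ 2 * R ^ 2 := by positivity
      refine le_of_mul_le_mul_right ?_ this
      linarith
    unfold gradNorm
    rw [Real.sqrt_le_left (by linarith)]
    nlinarith
end

section
/- (Lemma "maintaingraphlem", graphical case: a graph with gradient bound L₁ on a past time interval keeps gradient bound 4L₁ and controlled height for a short later time.) Let n ≥ 1. For every L₁ ≥ 1 there exists λ₁ ∈ (0,1) such that the following holds. Let ρ₁, R₁, Γ₁ > 0, s₀ ∈ ℝ, and let u : (s₀−R₁², s₀+λ₁²R₁²) × Bⁿ(0, ρ₁+R₁) → ℝ be a graphical mean curvature flow with |u(t,x)| < Γ₁ + R₁ for all (t,x). Suppose that for all t ∈ (s₀−R₁², s₀): sup_{Bⁿ(0,ρ₁+R₁)} |u(t,·)| < Γ₁ − R₁ and sup_{Bⁿ(0,ρ₁+R₁)}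 |Du(t,·)| ≤ L₁. Then for all t ∈ (s₀, s₀+λ₁²R₁²) and all x ∈ Bⁿ(0,ρ₁): |u(t,x)| ≤ sup_{(s₀−R₁²,s₀) × Bⁿ(0,ρ₁+R₁)} |u| + R₁ and |Du(t,x)| ≤ 4L₁. -/
open Metric Set MeasureTheory

open Filter Topology

section Helpers

local notation "bs" => fun i => EuclideanSpace.single i (1 : ℝ)

theorem line_hasDerivAt {n : ℕ} {F : Type*} [NormedAddCommGroup F] [NormedSpace ℝ F]
    {g : EuclideanSpace ℝ (Fin n) → F} {x v : EuclideanSpace ℝ (Fin n)} {s : ℝ}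
    (hg : DifferentiableAt ℝ g (x + s • v)) :
    HasDerivAt (fun r : ℝ => g (x + r • v)) (fderiv ℝ g (x + s • v) v) s := by
  have h1 : HasDerivAt (fun r : ℝ => x + r • v) v s := by
    simpa using ((hasDerivAt_id s).smul_const v).const_add x
  exact hg.hasFDerivAt.comp_hasDerivAt s h1

theorem line_tendsto {n : ℕ} (x v : EuclideanSpace ℝ (Fin n)) :
    Tendsto (fun r : ℝ => x + r • v) (𝓝 0) (𝓝 x) := by
  have : Continuous (fun r : ℝ => x + r • v) := by fun_prop
  simpa using this.tendsto 0

theorem second_deriv_test {f f' : ℝ → ℝ} {c : ℝ} (hmax : IsLocalMax f 0)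
    (h1 : ∀ᶠ s in 𝓝 (0 : ℝ), HasDerivAt f (f' s) s) (h2 : HasDerivAt f' c 0) :
    f' 0 = 0 ∧ c ≤ 0 := by
  have h0 : HasDerivAt f (f' 0) 0 := h1.self_of_nhds
  have hf0 : f' 0 = 0 := hmax.hasDerivAt_eq_zero h0
  refine ⟨hf0, ?_⟩
  by_contra hc
  push Not at hc
  have he : deriv f =ᶠ[𝓝 0] f' := h1.mono fun s hs => hs.deriv
  have hdd : deriv (deriv f) 0 = c := by rw [he.deriv_eq]; exact h2.deriv
  have hmin : IsLocalMin f 0 :=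
    isLocalMin_of_deriv_deriv_pos (by rw [hdd]; exact hc) (by rw [h0.deriv, hf0]) h0.continuousAt
  have hconst : f =ᶠ[𝓝 0] fun _ => f 0 := by
    filter_upwards [hmax, hmin] with s a b
    exact le_antisymm a b
  have : deriv f =ᶠ[𝓝 0] fun _ => 0 := by
    have := hconst.deriv
    simpa using this
  have := this.deriv_eq
  rw [hdd] at this
  simp at this
  exact hc.ne' this

theorem left_deriv_ge {f : ℝ → ℝ} {d ε t : ℝ} (hd : HasDerivAt f d t)
    (h : ∀ᶠ s in 𝓝[<] t, f s - ε * s ≤ f t - ε * t) : ε ≤ d := by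
  have h1 : HasDerivAt (fun s => f s - ε * s) (d - ε) t := by
    exact (hd.sub ((hasDerivAt_id t).const_mul ε)).congr_deriv (by simp)
  have h2 : Tendsto (slope (fun s => f s - ε * s) t) (𝓝[<] t) (𝓝 (d - ε)) :=
    (hasDerivAt_iff_tendsto_slope.1 h1).mono_left
      (nhdsWithin_mono _ fun s hs => (ne_of_lt hs))
  have h3 : 0 ≤ d - ε := by
    refine ge_of_tendsto h2 ?_
    filter_upwards [h, self_mem_nhdsWithin] with s hs hst
    rw [slope_def_field]
    have : s - t < 0 := sub_neg.2 hst
    exact div_nonneg_of_nonpos (by simpa using hs) this.le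
  linarith

theorem pd2_eq {n : ℕ} {g : EuclideanSpace ℝ (Fin n) → ℝ} {x : EuclideanSpace ℝ (Fin n)}
    (hg : DifferentiableAt ℝ (fderiv ℝ g) x) (i j : Fin n) :
    pd2 g x i j = fderiv ℝ (fderiv ℝ g) x (bs i) (bs j) := by
  unfold pd2 pd
  have := (hg.hasFDerivAt.clm_apply (hasFDerivAt_const (bs j) x)).fderiv
  simp only at this ⊢
  rw [this]
  simp

/-- the gradient as a vector -/
noncomputable def grd {n : ℕ} (g : EuclideanSpace ℝ (Fin n) → ℝ)
    (x : EuclideanSpace ℝ (Fin n)) : EuclideanSpace ℝ (Fin n) :=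
  ∑ i, pd g x i • EuclideanSpace.single i (1 : ℝ)

theorem vec_sum {n : ℕ} (v : EuclideanSpace ℝ (Fin n)) :
    v = ∑ i, v i • EuclideanSpace.single i (1 : ℝ) := by
  ext j
  simp [Finset.sum_apply, Pi.single_apply]

theorem grd_apply {n : ℕ} (g : EuclideanSpace ℝ (Fin n) → ℝ)
    (x : EuclideanSpace ℝ (Fin n)) (i : Fin n) : grd g x i = pd g x i := by
  simp [grd, Finset.sum_apply, Pi.single_apply]

theorem gradNormSq_eq {n : ℕ} (g : EuclideanSpace ℝ (Fin n) → ℝ)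
    (x : EuclideanSpace ℝ (Fin n)) : gradNormSq g x = ‖grd g x‖ ^ 2 := by
  rw [EuclideanSpace.real_norm_sq_eq]
  simp [grd_apply, gradNormSq]

theorem fderiv_eq_inner {n : ℕ} (g : EuclideanSpace ℝ (Fin n) → ℝ)
    (x v : EuclideanSpace ℝ (Fin n)) : fderiv ℝ g x v = inner ℝ (grd g x) v := by
  conv_lhs => rw [vec_sum v]
  simp only [map_sum, map_smul, smul_eq_mul, PiLp.inner_apply, grd_apply]
  rfl

theorem mcfRHS_eq {n : ℕ} {g : EuclideanSpace ℝ (Fin n) → ℝ} {x : EuclideanSpace ℝ (Fin n)}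
    (hg : DifferentiableAt ℝ (fderiv ℝ g) x) :
    mcfRHS g x = (∑ i, fderiv ℝ (fderiv ℝ g) x (bs i) (bs i))
      - fderiv ℝ (fderiv ℝ g) x (grd g x) (grd g x) / (1 + ‖grd g x‖ ^ 2) := by
  unfold mcfRHS
  rw [gradNormSq_eq]
  simp only [pd2_eq hg, sub_mul, Finset.sum_sub_distrib]
  congr 1
  · simp
  · conv_rhs => rw [show fderiv ℝ (fderiv ℝ g) x (grd g x) (grd g x)
      = fderiv ℝ (fderiv ℝ g) x (∑ i, pd g x i • (bs i)) (∑ i, pd g x i • (bs i)) from rfl]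
    simp only [map_sum, map_smul, smul_eq_mul, _root_.sum_apply,
      _root_.smul_apply, Finset.sum_div, Finset.mul_sum]
    rw [Finset.sum_comm]
    refine Finset.sum_congr rfl fun i _ => Finset.sum_congr rfl fun j _ => ?_
    ring

/-- positivity of the coefficient matrix -/
theorem trace_nonpos {n : ℕ}
    (B : EuclideanSpace ℝ (Fin n) →L[ℝ] EuclideanSpace ℝ (Fin n) →L[ℝ] ℝ)
    (hB : ∀ v, B v v ≤ 0) (p : EuclideanSpace ℝ (Fin n)) :
    (∑ i, B (bs i) (bs i)) - B p p / (1 + ‖p‖ ^ 2) ≤ 0 := by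
  have hq : 0 < 1 + ‖p‖ ^ 2 := by positivity
  have h1 : B p p = ∑ i, ∑ j, p i * p j * B (bs i) (bs j) := by
    conv_lhs => rw [vec_sum p]
    simp only [map_sum, map_smul, smul_eq_mul, _root_.sum_apply,
      _root_.smul_apply, Finset.mul_sum]
    rw [Finset.sum_comm]
    refine Finset.sum_congr rfl fun i _ => Finset.sum_congr rfl fun j _ => ?_
    ring
  have h2 : ∑ i, ∑ j, B (p i • (bs j) - p j • (bs i)) (p i • (bs j) - p j • (bs i)) ≤ 0 :=
    Finset.sum_nonpos fun i _ => Finset.sum_nonpos fun j _ => hB _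
  have h3 : ∑ i, ∑ j, B (p i • (bs j) - p j • (bs i)) (p i • (bs j) - p j • (bs i))
      = 2 * (‖p‖ ^ 2 * (∑ i, B (bs i) (bs i)) - B p p) := by
    have e1 : ∀ i j, B (p i • (bs j) - p j • (bs i)) (p i • (bs j) - p j • (bs i))
        = p i ^ 2 * B (bs j) (bs j) + p j ^ 2 * B (bs i) (bs i)
          - p i * p j * B (bs i) (bs j) - p j * p i * B (bs j) (bs i) := by
      intro i j
      simp only [map_sub, map_smul, _root_.sub_apply,
        _root_.smul_apply, smul_eq_mul]
      ring
    simp only [e1, Finset.sum_sub_distrib, Finset.sum_add_distrib]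
    rw [Finset.sum_comm (f := fun i j => p j * p i * B (bs j) (bs i)), ← h1,
      Finset.sum_comm (f := fun i j => p j ^ 2 * B (bs i) (bs i)),
      EuclideanSpace.real_norm_sq_eq, Finset.sum_mul_sum]
    ring
  have h4 : ∑ i, B (bs i) (bs i) ≤ 0 := Finset.sum_nonpos fun i _ => hB _
  rw [h3] at h2
  rw [sub_nonpos, le_div_iff₀ hq]
  nlinarith

/-- version for the shape of Hessian used below -/
theorem trace_nonpos' {n : ℕ}
    (T : EuclideanSpace ℝ (Fin n) →L[ℝ] EuclideanSpace ℝ (Fin n) →L[ℝ] ℝ)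
    (l : EuclideanSpace ℝ (Fin n) →L[ℝ] ℝ) (α β γ : ℝ)
    (hB : ∀ v, α * T v v + β * (l v) ^ 2 + γ * ‖v‖ ^ 2 ≤ 0) (p : EuclideanSpace ℝ (Fin n)) :
    α * ((∑ i, T (bs i) (bs i)) - T p p / (1 + ‖p‖ ^ 2))
      + β * ((∑ i, (l (bs i)) ^ 2) - (l p) ^ 2 / (1 + ‖p‖ ^ 2))
      + γ * (n - ‖p‖ ^ 2 / (1 + ‖p‖ ^ 2)) ≤ 0 := by
  have key := trace_nonpos (α • T + β • (l.smulRight l) + γ • (isBoundedBilinearMap_inner (𝕜 := ℝ)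
    (E := EuclideanSpace ℝ (Fin n))).toContinuousLinearMap) (fun v => by
    have := hB v
    simp only [_root_.add_apply, _root_.smul_apply, smul_eq_mul,
      ContinuousLinearMap.smulRight_apply, IsBoundedBilinearMap.toContinuousLinearMap_apply, real_inner_self_eq_norm_sq]
    linarith) p
  simp only [_root_.add_apply, _root_.smul_apply, smul_eq_mul,
      ContinuousLinearMap.smulRight_apply, IsBoundedBilinearMap.toContinuousLinearMap_apply, real_inner_self_eq_norm_sq,
      Finset.sum_add_distrib, ← Finset.mul_sum, PiLp.norm_single] at key
  simp only [norm_one, one_pow, Finset.sum_const, Finset.card_univ, Fintype.card_fin,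
    nsmul_eq_mul, mul_one, ← pow_two] at key
  refine le_trans (le_of_eq ?_) key
  ring

theorem trace_sq_nonneg {n : ℕ} (l : EuclideanSpace ℝ (Fin n) →L[ℝ] ℝ)
    (p : EuclideanSpace ℝ (Fin n)) :
    0 ≤ (∑ i, (l (bs i)) ^ 2) - (l p) ^ 2 / (1 + ‖p‖ ^ 2) := by
  have := trace_nonpos' 0 l 0 (-1) 0 (fun v => by simp; positivity) p
  simp only [zero_mul] at this
  linarith

theorem fderiv_slice {n : ℕ} {U : ℝ × EuclideanSpace ℝ (Fin n) → ℝ} {t : ℝ}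
    {x : EuclideanSpace ℝ (Fin n)} (h : DifferentiableAt ℝ U (t, x))
    (v : EuclideanSpace ℝ (Fin n)) :
    fderiv ℝ (fun y => U (t, y)) x v = fderiv ℝ U (t, x) (0, v) := by
  have h1 : HasFDerivAt (fun y : EuclideanSpace ℝ (Fin n) => (t, y))
      (ContinuousLinearMap.inr ℝ ℝ (EuclideanSpace ℝ (Fin n))) x := hasFDerivAt_prodMk_right t x
  have := (h.hasFDerivAt.comp x h1).fderiv
  have e : (U ∘ fun y => (t, y)) = fun y => U (t, y) := rfl
  rw [e] at this
  rw [this]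
  simp

theorem deriv_slice {n : ℕ} {U : ℝ × EuclideanSpace ℝ (Fin n) → ℝ} {t : ℝ}
    {x : EuclideanSpace ℝ (Fin n)} (h : DifferentiableAt ℝ U (t, x)) :
    HasDerivAt (fun s => U (s, x)) (fderiv ℝ U (t, x) (1, 0)) t := by
  have h1 : HasDerivAt (fun s : ℝ => (s, x)) (1, 0) t :=
    (hasDerivAt_id t).prodMk (hasDerivAt_const t x)
  exact h.hasFDerivAt.comp_hasDerivAt t h1

theorem time_deriv {n : ℕ} {U : ℝ × EuclideanSpace ℝ (Fin n) → ℝ} {t : ℝ}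
    {x e : EuclideanSpace ℝ (Fin n)} {r : EuclideanSpace ℝ (Fin n) → ℝ} {c : ℝ}
    (hU : ContDiffAt ℝ 3 U (t, x))
    (hev : ∀ᶠ y in 𝓝 x, deriv (fun s => U (s, y)) t = r y)
    (hr : HasDerivAt (fun s : ℝ => r (x + s • e)) c 0) :
    HasDerivAt (fun s => fderiv ℝ (fun y => U (s, y)) x e) c t := by
  have hd : ∀ᶠ z in 𝓝 (t, x), DifferentiableAt ℝ U z := by
    filter_upwards [hU.eventually (by decide)] with z hz
    exact hz.differentiableAt (by decide)
  have hdd : DifferentiableAt ℝ (fderiv ℝ U) (t, x) :=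
    (hU.fderiv_right (m := 2) (by norm_num)).differentiableAt (by decide)
  have hsymm : IsSymmSndFDerivAt ℝ U (t, x) := hU.isSymmSndFDerivAt (by
    rw [minSmoothness_of_isRCLikeNormedField]; decide)
  have h1 : HasDerivAt (fun s : ℝ => (s, x)) (1, 0) t :=
    (hasDerivAt_id t).prodMk (hasDerivAt_const t x)
  have a1 : HasDerivAt (fun s => fderiv ℝ U (s, x)) (fderiv ℝ (fderiv ℝ U) (t, x) (1, 0)) t :=
    hdd.hasFDerivAt.comp_hasDerivAt t h1
  have a2 : HasDerivAt (fun s => fderiv ℝ U (s, x) (0, e))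
      (fderiv ℝ (fderiv ℝ U) (t, x) (1, 0) (0, e)) t := by
    simpa using a1.clm_apply (hasDerivAt_const t ((0 : ℝ), e))
  have a3 : HasDerivAt (fun s => fderiv ℝ (fun y => U (s, y)) x e)
      (fderiv ℝ (fderiv ℝ U) (t, x) (1, 0) (0, e)) t := by
    refine a2.congr_of_eventuallyEq ?_
    have ht : Tendsto (fun s : ℝ => (s, x)) (𝓝 t) (𝓝 (t, x)) := h1.continuousAt
    filter_upwards [ht.eventually hd] with s hs
    exact fderiv_slice hs e
  have h2 : HasDerivAt (fun s : ℝ => (t, x + s • e)) (0, e) 0 := by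
    refine (hasDerivAt_const (0 : ℝ) t).prodMk ?_
    simpa using ((hasDerivAt_id (0 : ℝ)).smul_const e).const_add x
  have ht2 : Tendsto (fun s : ℝ => (t, x + s • e)) (𝓝 0) (𝓝 (t, x)) := by
    have := h2.continuousAt.tendsto
    simpa using this
  have b1 : HasDerivAt (fun s : ℝ => fderiv ℝ U (t, x + s • e))
      (fderiv ℝ (fderiv ℝ U) (t, x) (0, e)) 0 := by
    have hdd' : HasFDerivAt (fderiv ℝ U) (fderiv ℝ (fderiv ℝ U) (t, x)) (t, x + (0 : ℝ) • e) := by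
      simpa using hdd.hasFDerivAt
    exact hdd'.comp_hasDerivAt 0 h2
  have b2 : HasDerivAt (fun s : ℝ => fderiv ℝ U (t, x + s • e) (1, 0))
      (fderiv ℝ (fderiv ℝ U) (t, x) (0, e) (1, 0)) 0 := by
    simpa using b1.clm_apply (hasDerivAt_const (0 : ℝ) ((1 : ℝ), (0 : EuclideanSpace ℝ (Fin n))))
  have b3 : HasDerivAt (fun s : ℝ => r (x + s • e))
      (fderiv ℝ (fderiv ℝ U) (t, x) (0, e) (1, 0)) 0 := by
    refine b2.congr_of_eventuallyEq ?_
    filter_upwards [ht2.eventually hd, (line_tendsto x e).eventually hev] with s hs hs2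
    rw [← hs2]
    exact (deriv_slice hs).deriv
  rw [hr.unique b3, hsymm]
  exact a3

theorem rhs_line_deriv {n : ℕ} {g : EuclideanSpace ℝ (Fin n) → ℝ}
    {x e : EuclideanSpace ℝ (Fin n)} (hg : ContDiffAt ℝ 3 g x)
    (hp : grd g x = (fderiv ℝ g x e) • e) :
    HasDerivAt (fun r : ℝ => mcfRHS g (x + r • e))
      (((∑ i, fderiv ℝ (fderiv ℝ (fun y => fderiv ℝ g y e)) x (bs i) (bs i))
        - fderiv ℝ (fderiv ℝ (fun y => fderiv ℝ g y e)) x (grd g x) (grd g x)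
          / (1 + ‖grd g x‖ ^ 2))
        - 2 * fderiv ℝ g x e / (1 + ‖grd g x‖ ^ 2) *
          ((∑ i, (fderiv ℝ (fun y => fderiv ℝ g y e) x (bs i)) ^ 2)
            - (fderiv ℝ (fun y => fderiv ℝ g y e) x (grd g x)) ^ 2 / (1 + ‖grd g x‖ ^ 2))) 0 := by
  have hg1 : ContDiffAt ℝ 2 (fderiv ℝ g) x := hg.fderiv_right (by norm_num)
  have hg2 : ContDiffAt ℝ 1 (fderiv ℝ (fderiv ℝ g)) x := hg1.fderiv_right (by norm_num)
  have hev : ∀ᶠ y in 𝓝 x, ContDiffAt ℝ 3 g y := hg.eventually (by decide)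
  have hdiff : ∀ y, ContDiffAt ℝ 3 g y → DifferentiableAt ℝ (fderiv ℝ g) y := fun y hy =>
    (hy.fderiv_right (m := 2) (by norm_num)).differentiableAt (by decide)
  have hsy : ∀ y, ContDiffAt ℝ 3 g y → IsSymmSndFDerivAt ℝ g y := fun y hy =>
    hy.isSymmSndFDerivAt (by rw [minSmoothness_of_isRCLikeNormedField]; decide)
  have hsy2 : IsSymmSndFDerivAt ℝ (fderiv ℝ g) x :=
    hg1.isSymmSndFDerivAt (by rw [minSmoothness_of_isRCLikeNormedField])
  -- first derivative of `h`
  have hh1 : ∀ y, ContDiffAt ℝ 3 g y →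
      fderiv ℝ (fun y => fderiv ℝ g y e) y = fderiv ℝ (fderiv ℝ g) y e := by
    intro y hy
    ext w
    have := ((hdiff y hy).hasFDerivAt.clm_apply (hasFDerivAt_const e y)).fderiv
    rw [this, hsy y hy e w]
    simp
  have hh2 : ∀ v w, fderiv ℝ (fderiv ℝ (fun y => fderiv ℝ g y e)) x v w
      = fderiv ℝ (fderiv ℝ (fderiv ℝ g)) x e v w := by
    intro v w
    have h1 : fderiv ℝ (fun y => fderiv ℝ g y e) =ᶠ[𝓝 x]
        fun y => fderiv ℝ (fderiv ℝ g) y e := hev.mono hh1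
    have h2 := ((hg2.differentiableAt (by decide)).hasFDerivAt.clm_apply
      (hasFDerivAt_const e x)).fderiv
    rw [h1.fderiv_eq, h2, hsy2 e v]
    simp
  have hT : HasDerivAt (fun r : ℝ => fderiv ℝ (fderiv ℝ g) (x + r • e))
      (fderiv ℝ (fderiv ℝ (fderiv ℝ g)) x e) 0 := by
    have := line_hasDerivAt (g := fderiv ℝ (fderiv ℝ g)) (x := x) (v := e) (s := 0)
      (by simpa using hg2.differentiableAt (by decide))
    simpa using this
  have hG : HasDerivAt (fun r : ℝ => fderiv ℝ g (x + r • e))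
      (fderiv ℝ (fderiv ℝ g) x e) 0 := by
    have := line_hasDerivAt (g := fderiv ℝ g) (x := x) (v := e) (s := 0)
      (by simpa using hg1.differentiableAt (by decide))
    simpa using this
  set l := fderiv ℝ (fderiv ℝ g) x e with hl
  set H := fderiv ℝ g x e with hH
  set T := fderiv ℝ (fderiv ℝ g) x with hTdef
  set p := grd g x with hpdef
  set p' : EuclideanSpace ℝ (Fin n) := ∑ i, l (bs i) • (bs i) with hp'
  have hP : HasDerivAt (fun r : ℝ => grd g (x + r • e)) p' 0 := by
    unfold grd
    refine HasDerivAt.fun_sum fun i _ => ?_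
    refine HasDerivAt.smul_const ?_ _
    unfold pd
    simpa using hG.clm_apply (hasDerivAt_const (0 : ℝ) (bs i))
  have hP0 : grd g (x + (0 : ℝ) • e) = p := by simp [hpdef]
  have hT0 : fderiv ℝ (fderiv ℝ g) (x + (0 : ℝ) • e) = T := by simp [hTdef]
  have hq : HasDerivAt (fun r : ℝ => 1 + ‖grd g (x + r • e)‖ ^ 2) (2 * inner ℝ p p') 0 := by
    have := (hP.norm_sq).const_add 1
    simpa [hP0] using this
  have hTpp := (hT.clm_apply hP).clm_apply hP
  have hsum : HasDerivAt (fun r : ℝ => ∑ i, fderiv ℝ (fderiv ℝ g) (x + r • e) (bs i) (bs i))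
      (∑ i, fderiv ℝ (fderiv ℝ (fderiv ℝ g)) x e (bs i) (bs i)) 0 := by
    refine HasDerivAt.fun_sum fun i _ => ?_
    simpa using (hT.clm_apply (hasDerivAt_const (0 : ℝ) (bs i))).clm_apply
      (hasDerivAt_const (0 : ℝ) (bs i))
  have hq0 : 1 + ‖p‖ ^ 2 ≠ 0 := by positivity
  have hall := hsum.sub (hTpp.div hq (by rw [hP0]; exact hq0))
  have hall' := hall.congr_of_eventuallyEq (f₁ := fun r : ℝ => mcfRHS g (x + r • e)) (by
    filter_upwards [(line_tendsto x e).eventually hev] with r hr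
    rw [mcfRHS_eq (hdiff _ hr)]
    rfl)
  refine hall'.congr_deriv ?_
  rw [hP0, hT0]
  simp only [hh2, hh1 x hg]
  have hTe : ∀ v, T v e = l v := fun v => by rw [hl]; exact hsy x hg v e
  have c1 : T p' p = H * ∑ i, (l (bs i)) ^ 2 := by
    rw [hp, map_smul, hTe, hp', map_sum]
    simp [pow_two]
  have c2 : T p p' = H * ∑ i, (l (bs i)) ^ 2 := by
    rw [← c1]; exact hsy x hg p p'
  have c3 : T p p = H * l p := by
    conv_lhs => rw [show T p p = T p (H • e) by rw [← hp]]
    rw [map_smul, hTe, smul_eq_mul]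
  have c4 : inner ℝ p p' = l p := by
    rw [hp', inner_sum]
    conv_rhs => rw [vec_sum p, map_sum]
    refine Finset.sum_congr rfl fun i _ => ?_
    rw [inner_smul_right, map_smul, smul_eq_mul]
    simp [EuclideanSpace.inner_single_right, mul_comm]
  simp only [_root_.add_apply]
  rw [c1, c2, c3, c4]
  field_simp
  ring

theorem parabolic_max {n : ℕ} {F : ℝ × EuclideanSpace ℝ (Fin n) → ℝ} {t0 t1 R m : ℝ}
    {x0 : EuclideanSpace ℝ (Fin n)}
    (hc : ContinuousOn F (Icc t0 t1 ×ˢ closedBall x0 R))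
    (hinit : ∀ x ∈ closedBall x0 R, F (t0, x) ≤ m)
    (hlat : ∀ t ∈ Icc t0 t1, ∀ x, dist x x0 = R → F (t, x) ≤ m)
    (hstep : ∀ ε > 0, ∀ t ∈ Ioc t0 t1, ∀ x ∈ ball x0 R, m < F (t, x) →
      (∀ s ∈ Icc t0 t1, ∀ y ∈ closedBall x0 R, F (s, y) - ε * s ≤ F (t, x) - ε * t) → False) :
    ∀ t ∈ Icc t0 t1, ∀ x ∈ closedBall x0 R, F (t, x) ≤ m := by
  intro t ht x hx
  by_contra hlt
  push Not at hlt
  have htt : 0 ≤ t1 - t0 := by linarith [ht.1, ht.2]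
  obtain ⟨ε, hε, hε2⟩ : ∃ ε > 0, ε * (t1 - t0) < F (t, x) - m := by
    refine ⟨(F (t, x) - m) / (t1 - t0 + 1), by apply div_pos <;> linarith, ?_⟩
    rw [div_mul_eq_mul_div, div_lt_iff₀ (by linarith)]
    nlinarith
  have hK : IsCompact (Icc t0 t1 ×ˢ closedBall x0 R) :=
    isCompact_Icc.prod (isCompact_closedBall x0 R)
  obtain ⟨⟨s, y⟩, ⟨hs, hy⟩, hmax⟩ := hK.exists_isMaxOn ⟨(t, x), ht, hx⟩
    (f := fun z => F z - ε * z.1) (by fun_prop)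
  have hmax' : ∀ s' ∈ Icc t0 t1, ∀ y' ∈ closedBall x0 R,
      F (s', y') - ε * s' ≤ F (s, y) - ε * s := fun s' hs' y' hy' => hmax (⟨hs', hy'⟩ :
        (s', y') ∈ Icc t0 t1 ×ˢ closedBall x0 R)
  simp only at hs hy
  have hgt : m < F (s, y) := by
    have := hmax' t ht x hx
    have h1 : ε * (t - s) ≤ ε * (t1 - t0) :=
      mul_le_mul_of_nonneg_left (by linarith [hs.1, ht.2]) hε.le
    linarith
  have hs0 : s ≠ t0 := fun h => by
    rw [h] at hgt; exact absurd (hinit y hy) (not_le.2 hgt)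
  have hyR : dist y x0 ≠ R := fun h => absurd (hlat s hs y h) (not_le.2 hgt)
  exact hstep ε hε s ⟨lt_of_le_of_ne hs.1 (Ne.symm hs0), hs.2⟩ y
    (lt_of_le_of_ne (mem_closedBall.1 hy) hyR) hgt hmax'

theorem line_calc {k k' P P' : ℝ → ℝ} {k2 P2 : ℝ}
    (hk : ∀ᶠ s in 𝓝 (0 : ℝ), HasDerivAt k (k' s) s)
    (hP : ∀ᶠ s in 𝓝 (0 : ℝ), HasDerivAt P (P' s) s)
    (hk' : HasDerivAt k' k2 0) (hP' : HasDerivAt P' P2 0)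
    (hmax : IsLocalMax (fun s => (1 + k s ^ 2) * P s ^ 2) 0) :
    2 * k 0 * k' 0 * P 0 ^ 2 + 2 * (1 + k 0 ^ 2) * P 0 * P' 0 = 0 ∧
    2 * k' 0 ^ 2 * P 0 ^ 2 + 2 * k 0 * k2 * P 0 ^ 2 + 8 * k 0 * k' 0 * P 0 * P' 0
      + 2 * (1 + k 0 ^ 2) * (P' 0 ^ 2 + P 0 * P2) ≤ 0 := by
  have h1 : ∀ᶠ s in 𝓝 (0 : ℝ), HasDerivAt (fun s => (1 + k s ^ 2) * P s ^ 2)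
      (2 * k s * k' s * P s ^ 2 + 2 * (1 + k s ^ 2) * P s * P' s) s := by
    filter_upwards [hk, hP] with s hs hs'
    refine (((hs.pow 2).const_add 1).mul (hs'.pow 2)).congr_deriv ?_
    simp
    ring
  have k0 := hk.self_of_nhds
  have P0 := hP.self_of_nhds
  have h2 : HasDerivAt (fun s => 2 * k s * k' s * P s ^ 2 + 2 * (1 + k s ^ 2) * P s * P' s)
      (2 * k' 0 ^ 2 * P 0 ^ 2 + 2 * k 0 * k2 * P 0 ^ 2 + 8 * k 0 * k' 0 * P 0 * P' 0
      + 2 * (1 + k 0 ^ 2) * (P' 0 ^ 2 + P 0 * P2)) 0 := by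
    refine ((((k0.const_mul 2).mul hk').mul (P0.pow 2)).add
      (((((k0.pow 2).const_add 1).const_mul 2).mul P0).mul hP')).congr_deriv ?_
    simp
    ring
  exact second_deriv_test hmax h1 h2

theorem line_calc2 {k k' P P' : ℝ → ℝ} {k2 P2 c : ℝ}
    (hk : ∀ᶠ s in 𝓝 (0 : ℝ), HasDerivAt k (k' s) s)
    (hP : ∀ᶠ s in 𝓝 (0 : ℝ), HasDerivAt P (P' s) s)
    (hk' : HasDerivAt k' k2 0) (hP' : HasDerivAt P' P2 0)
    (hmax : IsLocalMax (fun s => P s - (k s - c) ^ 2) 0) :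
    P2 - 2 * k' 0 ^ 2 - 2 * (k 0 - c) * k2 ≤ 0 := by
  have h1 : ∀ᶠ s in 𝓝 (0 : ℝ), HasDerivAt (fun s => P s - (k s - c) ^ 2)
      (P' s - 2 * (k s - c) * k' s) s := by
    filter_upwards [hk, hP] with s hs hs'
    refine (hs'.sub ((hs.sub_const c).pow 2)).congr_deriv ?_
    simp
  have k0 := hk.self_of_nhds
  have h2 : HasDerivAt (fun s => P' s - 2 * (k s - c) * k' s)
      (P2 - 2 * k' 0 ^ 2 - 2 * (k 0 - c) * k2) 0 := by
    refine (hP'.sub (((k0.sub_const c).const_mul 2).mul hk')).congr_deriv ?_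
    ring
  exact (second_deriv_test hmax h1 h2).2

theorem line_normsq {n : ℕ} (x x0 v : EuclideanSpace ℝ (Fin n)) (C : ℝ) :
    (∀ s : ℝ, HasDerivAt (fun r : ℝ => C - ‖x + r • v - x0‖ ^ 2)
      (-2 * inner ℝ (x - x0) v - 2 * s * ‖v‖ ^ 2) s) ∧
    HasDerivAt (fun s : ℝ => -2 * inner ℝ (x - x0) v - 2 * s * ‖v‖ ^ 2) (-2 * ‖v‖ ^ 2) 0 := by
  have e : (fun r : ℝ => C - ‖x + r • v - x0‖ ^ 2) = fun r : ℝ =>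
      C - (‖x - x0‖ ^ 2 + r * (2 * inner ℝ (x - x0) v) + r ^ 2 * ‖v‖ ^ 2) := by
    funext r
    rw [show x + r • v - x0 = (x - x0) + r • v by abel, norm_add_sq_real, norm_smul,
      inner_smul_right, mul_pow, Real.norm_eq_abs, sq_abs]
    ring
  constructor
  · intro s
    rw [e]
    have := ((((hasDerivAt_id s).mul_const (2 * inner ℝ (x - x0) v)).const_add (‖x - x0‖ ^ 2)).add
      (((hasDerivAt_id s).pow 2).mul_const (‖v‖ ^ 2))).const_sub C
    refine this.congr_deriv ?_
    simp
    ring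
  · have := (((hasDerivAt_id (0 : ℝ)).const_mul 2).mul_const (‖v‖ ^ 2)).const_sub
      (-2 * inner ℝ (x - x0) v)
    refine this.congr_deriv ?_
    simp

theorem height_est {n : ℕ} {U : ℝ × EuclideanSpace ℝ (Fin n) → ℝ} {t0 t1 R c : ℝ}
    {x0 : EuclideanSpace ℝ (Fin n)}
    (hU : ∀ t ∈ Icc t0 t1, ∀ x ∈ closedBall x0 R, ContDiffAt ℝ 3 U (t, x))
    (hpde : ∀ t ∈ Icc t0 t1, ∀ x ∈ closedBall x0 R, ∀ᶠ y in 𝓝 x,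
      deriv (fun s => U (s, y)) t = mcfRHS (fun y => U (t, y)) y)
    (hinit : ∀ x ∈ closedBall x0 R, R ^ 2 ≤ (U (t0, x) - c) ^ 2) :
    ∀ t ∈ Icc t0 t1, ∀ x ∈ closedBall x0 R,
      R ^ 2 - 2 * n * (t - t0) - ‖x - x0‖ ^ 2 ≤ (U (t, x) - c) ^ 2 := by
  have hcont : ContinuousOn U (Icc t0 t1 ×ˢ closedBall x0 R) := fun z hz =>
    (hU z.1 hz.1 z.2 hz.2).continuousAt.continuousWithinAt
  have key := parabolic_max (F := fun z => R ^ 2 - 2 * n * (z.1 - t0) - ‖z.2 - x0‖ ^ 2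
      - (U z - c) ^ 2) (t0 := t0) (t1 := t1) (R := R) (m := 0) (x0 := x0)
    (by fun_prop)
    (fun x hx => by
      have := hinit x hx
      have h2 : 0 ≤ ‖x - x0‖ ^ 2 := by positivity
      simp only [sub_self, mul_zero]
      linarith)
    (fun t ht x hx => by
      rw [dist_eq_norm] at hx
      simp only [hx]
      have h1 : 0 ≤ 2 * (n : ℝ) * (t - t0) := mul_nonneg (by positivity) (by linarith [ht.1])
      nlinarith [sq_nonneg (U (t, x) - c)])
    (by
      intro ε hε t ht x hx _ hmax
      have htI : t ∈ Icc t0 t1 := ⟨ht.1.le, ht.2⟩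
      have hxc : x ∈ closedBall x0 R := ball_subset_closedBall hx
      have hUx := hU t htI x hxc
      have hg : ContDiffAt ℝ 3 (fun y => U (t, y)) x :=
        hUx.comp x (f := fun y => (t, y)) (by fun_prop)
      set g := fun y => U (t, y) with hgdef
      have hg1 : DifferentiableAt ℝ (fderiv ℝ g) x :=
        (hg.fderiv_right (m := 2) (by norm_num)).differentiableAt (by decide)
      have hloc : ∀ᶠ y in 𝓝 x, y ∈ closedBall x0 R :=
        Filter.mem_of_superset (isOpen_ball.mem_nhds hx) ball_subset_closedBall
      have hgd : ∀ᶠ y in 𝓝 x, DifferentiableAt ℝ g y :=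
        (hg.eventually (by decide)).mono fun y hy => hy.differentiableAt (by decide)
      -- second derivatives
      have hB : ∀ v, (-2 * (U (t, x) - c)) * fderiv ℝ (fderiv ℝ g) x v v
          + (-2) * (fderiv ℝ g x v) ^ 2 + (-2) * ‖v‖ ^ 2 ≤ 0 := by
        intro v
        obtain ⟨q1, q2⟩ := line_normsq x x0 v (R ^ 2 - 2 * n * (t - t0))
        have hk' : HasDerivAt (fun r : ℝ => fderiv ℝ g (x + r • v) v)
            (fderiv ℝ (fderiv ℝ g) x v v) 0 := by
          have := (line_hasDerivAt (g := fderiv ℝ g) (x := x) (v := v) (s := 0)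
            (by simpa using hg1)).clm_apply (hasDerivAt_const (0 : ℝ) v)
          simpa using this
        have := line_calc2 (c := c) (k := fun r : ℝ => g (x + r • v))
          (k' := fun r : ℝ => fderiv ℝ g (x + r • v) v)
          (((line_tendsto x v).eventually hgd).mono fun r hr => line_hasDerivAt hr)
          (Eventually.of_forall q1) hk' q2 (by
            filter_upwards [(line_tendsto x v).eventually hloc] with r hr
            have := hmax t htI _ hr
            simp only [zero_smul, add_zero]
            simp only [hgdef]
            linarith)
        simp only [zero_smul, add_zero] at this
        have e : g x = U (t, x) := rfl
        rw [e] at this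
        linarith
      have htr := trace_nonpos' _ _ _ _ _ hB (grd g x)
      rw [← mcfRHS_eq hg1] at htr
      have e1 : ∑ i, (fderiv ℝ g x (bs i)) ^ 2 = ‖grd g x‖ ^ 2 := by
        rw [← gradNormSq_eq]; rfl
      have e2 : fderiv ℝ g x (grd g x) = ‖grd g x‖ ^ 2 := by
        rw [fderiv_eq_inner, real_inner_self_eq_norm_sq]
      rw [e1, e2] at htr
      -- time derivative
      have hut : HasDerivAt (fun s => U (s, x)) (mcfRHS g x) t := by
        rw [← (hpde t htI x hxc).self_of_nhds]
        exact (deriv_slice (hUx.differentiableAt (by decide))).differentiableAt.hasDerivAt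
      have hFt : HasDerivAt (fun s => R ^ 2 - 2 * n * (s - t0) - ‖x - x0‖ ^ 2
          - (U (s, x) - c) ^ 2) (-2 * n - 2 * (U (t, x) - c) * mcfRHS g x) t := by
        refine ((((((hasDerivAt_id t).sub_const t0).const_mul (2 * (n : ℝ))).const_sub
          (R ^ 2)).sub_const (‖x - x0‖ ^ 2)).sub ((hut.sub_const c).pow 2)).congr_deriv ?_
        simp
      have hεd := left_deriv_ge hFt (ε := ε) (by
        filter_upwards [Ioo_mem_nhdsLT ht.1] with s hs
        exact hmax s ⟨hs.1.le, hs.2.le.trans ht.2⟩ x hxc)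
      have hq : (1 + ‖grd g x‖ ^ 2) ≠ 0 := by positivity
      have e3 : ‖grd g x‖ ^ 2 - (‖grd g x‖ ^ 2) ^ 2 / (1 + ‖grd g x‖ ^ 2)
          = ‖grd g x‖ ^ 2 / (1 + ‖grd g x‖ ^ 2) := by
        field_simp
        ring
      rw [e3] at htr
      linarith)
  intro t ht x hx
  have := key t ht x hx
  simp only at this
  linarith

theorem grad_est {n : ℕ} (hn : 1 ≤ n) {U : ℝ × EuclideanSpace ℝ (Fin n) → ℝ} {t0 t1 R L : ℝ}
    {x0 : EuclideanSpace ℝ (Fin n)}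
    (hU : ∀ t ∈ Icc t0 t1, ∀ x ∈ closedBall x0 R, ContDiffAt ℝ 3 U (t, x))
    (hpde : ∀ t ∈ Icc t0 t1, ∀ x ∈ closedBall x0 R, ∀ᶠ y in 𝓝 x,
      deriv (fun s => U (s, y)) t = mcfRHS (fun y => U (t, y)) y)
    (hinit : ∀ x ∈ closedBall x0 R, gradNormSq (fun y => U (t0, y)) x ≤ L ^ 2) :
    ∀ t ∈ Icc t0 t1, ∀ x ∈ closedBall x0 R,
      (1 + gradNormSq (fun y => U (t, y)) x) *
        (max (R ^ 2 - 2 * n * (t - t0) - ‖x - x0‖ ^ 2) 0) ^ 2 ≤ (1 + L ^ 2) * R ^ 4 := by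
  have hm : 0 ≤ (1 + L ^ 2) * R ^ 4 := by positivity
  have hgn : ∀ g : EuclideanSpace ℝ (Fin n) → ℝ, ∀ x, 0 ≤ gradNormSq g x := fun g x => by
    rw [gradNormSq_eq]; positivity
  have hgcont : ContinuousOn (fun z : ℝ × EuclideanSpace ℝ (Fin n) =>
      gradNormSq (fun y => U (z.1, y)) z.2) (Icc t0 t1 ×ˢ closedBall x0 R) := by
    have h1 : ContinuousOn (fderiv ℝ U) (Icc t0 t1 ×ˢ closedBall x0 R) := fun z hz =>
      ((hU z.1 hz.1 z.2 hz.2).fderiv_right (m := 2)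
        (by norm_num)).continuousAt.continuousWithinAt
    have h2 : ContinuousOn (fun z : ℝ × EuclideanSpace ℝ (Fin n) =>
        ∑ i, (fderiv ℝ U z (0, bs i)) ^ 2) (Icc t0 t1 ×ˢ closedBall x0 R) := by
      refine continuousOn_finsetSum _ fun i _ => ?_
      exact (h1.clm_apply continuousOn_const).pow 2
    refine h2.congr fun z hz => ?_
    unfold gradNormSq pd
    refine Finset.sum_congr rfl fun i _ => ?_
    rw [fderiv_slice ((hU z.1 hz.1 z.2 hz.2).differentiableAt (by decide))]
  have key := parabolic_max (F := fun z => (1 + gradNormSq (fun y => U (z.1, y)) z.2) *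
        (max (R ^ 2 - 2 * n * (z.1 - t0) - ‖z.2 - x0‖ ^ 2) 0) ^ 2)
      (t0 := t0) (t1 := t1) (R := R) (m := (1 + L ^ 2) * R ^ 4) (x0 := x0)
    (by
      refine (continuousOn_const.add hgcont).mul (Continuous.continuousOn ?_)
      fun_prop)
    (fun x hx => by
      have h1 := hinit x hx
      have h2 : 0 ≤ ‖x - x0‖ ^ 2 := by positivity
      have h3 : max (R ^ 2 - 2 * n * (t0 - t0) - ‖x - x0‖ ^ 2) 0 ≤ R ^ 2 :=
        max_le (by simp only [sub_self, mul_zero]; linarith) (by positivity)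
      have h4 : 0 ≤ max (R ^ 2 - 2 * n * (t0 - t0) - ‖x - x0‖ ^ 2) 0 := le_max_right _ _
      have h5 := pow_le_pow_left₀ h4 h3 2
      have h6 : (1 + gradNormSq (fun y => U (t0, y)) x) *
        (max (R ^ 2 - 2 * n * (t0 - t0) - ‖x - x0‖ ^ 2) 0) ^ 2 ≤ (1 + L ^ 2) * (R ^ 2) ^ 2 :=
        mul_le_mul (by linarith) h5 (by positivity) (by positivity)
      refine h6.trans (le_of_eq ?_)
      ring)
    (fun t ht x hx => by
      rw [dist_eq_norm] at hx
      have h1 : 0 ≤ 2 * (n : ℝ) * (t - t0) := mul_nonneg (by positivity) (by linarith [ht.1])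
      simp only [hx]
      rw [max_eq_right (by linarith)]
      simpa using hm)
    (by
      intro ε hε t ht x hx hgt hmax
      simp only at hgt hmax
      have htI : t ∈ Icc t0 t1 := ⟨ht.1.le, ht.2⟩
      have hxc : x ∈ closedBall x0 R := ball_subset_closedBall hx
      have hUx := hU t htI x hxc
      have hg : ContDiffAt ℝ 3 (fun y => U (t, y)) x :=
        hUx.comp x (f := fun y => (t, y)) (by fun_prop)
      set g := fun y => U (t, y) with hgdef
      have hφ : 0 < R ^ 2 - 2 * n * (t - t0) - ‖x - x0‖ ^ 2 := by
        by_contra h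
        rw [max_eq_right (not_lt.1 h)] at hgt
        simp at hgt
        linarith
      rw [max_eq_left hφ.le] at hmax
      -- direction of the gradient
      obtain ⟨e, he1, he2⟩ : ∃ e : EuclideanSpace ℝ (Fin n), ‖e‖ = 1 ∧
          grd g x = ‖grd g x‖ • e := by
        by_cases h0 : grd g x = 0
        · refine ⟨EuclideanSpace.single ⟨0, hn⟩ 1, by simp, by simp [h0]⟩
        · have h1 : ‖grd g x‖ ≠ 0 := norm_ne_zero_iff.2 h0
          refine ⟨‖grd g x‖⁻¹ • grd g x, ?_, ?_⟩
          · rw [norm_smul, norm_inv, norm_norm, inv_mul_cancel₀ h1]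
          · rw [smul_smul, mul_inv_cancel₀ h1, one_smul]
      have hH : fderiv ℝ g x e = ‖grd g x‖ := by
        rw [fderiv_eq_inner, he2, inner_smul_left, real_inner_self_eq_norm_sq, he1]
        simp [norm_smul, he1]
      have hle : ∀ (f : EuclideanSpace ℝ (Fin n) → ℝ) y, (fderiv ℝ f y e) ^ 2
          ≤ gradNormSq f y := by
        intro f y
        rw [gradNormSq_eq, fderiv_eq_inner, ← sq_abs]
        have := abs_real_inner_le_norm (grd f y) e
        rw [he1, mul_one] at this
        exact pow_le_pow_left₀ (abs_nonneg _) this 2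
      have hgx : gradNormSq g x = (fderiv ℝ g x e) ^ 2 := by rw [gradNormSq_eq, hH]
      rw [hgx] at hmax
      set hf := fun y => fderiv ℝ g y e with hfdef
      have hfC : ContDiffAt ℝ 2 hf x :=
        (hg.fderiv_right (m := 2) (by norm_num)).clm_apply contDiffAt_const
      have hf1 : DifferentiableAt ℝ (fderiv ℝ hf) x :=
        (hfC.fderiv_right (m := 1) (by norm_num)).differentiableAt (by decide)
      have hfd : ∀ᶠ y in 𝓝 x, DifferentiableAt ℝ hf y :=
        (hfC.eventually (by decide)).mono fun y hy => hy.differentiableAt (by decide)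
      have hloc : ∀ᶠ y in 𝓝 x, y ∈ closedBall x0 R :=
        Filter.mem_of_superset (isOpen_ball.mem_nhds hx) ball_subset_closedBall
      have hφs : ∀ᶠ y in 𝓝 x, 0 < R ^ 2 - 2 * n * (t - t0) - ‖y - x0‖ ^ 2 := by
        have : ContinuousAt (fun y => R ^ 2 - 2 * n * (t - t0) - ‖y - x0‖ ^ 2) x := by fun_prop
        exact this.eventually (lt_mem_nhds hφ)
      have hφt : ∀ᶠ s in 𝓝 t, 0 < R ^ 2 - 2 * n * (s - t0) - ‖x - x0‖ ^ 2 := by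
        have : ContinuousAt (fun s : ℝ => R ^ 2 - 2 * n * (s - t0) - ‖x - x0‖ ^ 2) t := by
          fun_prop
        exact this.eventually (lt_mem_nhds hφ)
      set P := R ^ 2 - 2 * n * (t - t0) - ‖x - x0‖ ^ 2 with hPdef
      set H := fderiv ℝ g x e with hHdef
      have hq : 0 < 1 + H ^ 2 := by positivity
      -- second derivatives
      have hB : ∀ v, (2 * H * P ^ 2) * fderiv ℝ (fderiv ℝ hf) x v v
          + (P ^ 2 * (2 - 6 * H ^ 2 / (1 + H ^ 2))) * (fderiv ℝ hf x v) ^ 2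
          + (-4 * (1 + H ^ 2) * P) * ‖v‖ ^ 2 ≤ 0 := by
        intro v
        obtain ⟨q1, q2⟩ := line_normsq x x0 v (R ^ 2 - 2 * n * (t - t0))
        have hk' : HasDerivAt (fun r : ℝ => fderiv ℝ hf (x + r • v) v)
            (fderiv ℝ (fderiv ℝ hf) x v v) 0 := by
          have := (line_hasDerivAt (g := fderiv ℝ hf) (x := x) (v := v) (s := 0)
            (by simpa using hf1)).clm_apply (hasDerivAt_const (0 : ℝ) v)
          simpa using this
        have := line_calc (k := fun r : ℝ => hf (x + r • v))
          (k' := fun r : ℝ => fderiv ℝ hf (x + r • v) v)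
          (((line_tendsto x v).eventually hfd).mono fun r hr => line_hasDerivAt hr)
          (Eventually.of_forall q1) hk' q2 (by
            filter_upwards [(line_tendsto x v).eventually hloc,
              (line_tendsto x v).eventually hφs] with r hr hr2
            have h1 := hmax t htI _ hr
            rw [max_eq_left hr2.le] at h1
            have h2 := mul_le_mul_of_nonneg_right (hle g (x + r • v))
              (sq_nonneg (R ^ 2 - 2 * n * (t - t0) - ‖x + r • v - x0‖ ^ 2))
            simp only [zero_smul, add_zero]
            simp only [hfdef, ← hHdef, ← hPdef]
            linarith)
        simp only [zero_smul, add_zero] at this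
        have e0 : hf x = H := rfl
        rw [e0, ← hPdef] at this
        obtain ⟨w1, w2⟩ := this
        set a := fderiv ℝ hf x v
        set b := -2 * inner ℝ (x - x0) v - 2 * 0 * ‖v‖ ^ 2
        have hb : b = - (H * a * P) / (1 + H ^ 2) := by
          rw [eq_div_iff hq.ne']
          have : P * (H * a * P + (1 + H ^ 2) * b) = 0 := by linarith
          have := (mul_eq_zero.1 this).resolve_left hφ.ne'
          linarith
        rw [hb] at w2
        refine le_trans (le_of_eq ?_) w2
        field_simp
        ring
      have htr := trace_nonpos' _ _ _ _ _ hB (grd g x)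
      have hsq := trace_sq_nonneg (fderiv ℝ hf x) (grd g x)
      -- time derivative
      have hline := rhs_line_deriv (g := g) (x := x) (e := e) hg (by
        rw [← hHdef, hH]; exact he2)
      have hut := time_deriv hUx (hpde t htI x hxc) hline
      rw [← hH] at htr hsq hut
      simp only [← hfdef, ← hHdef] at hut
      set A := (∑ i, fderiv ℝ (fderiv ℝ hf) x (bs i) (bs i))
        - fderiv ℝ (fderiv ℝ hf) x (grd g x) (grd g x) / (1 + H ^ 2) with hA
      set a := (∑ i, (fderiv ℝ hf x (bs i)) ^ 2)
            - (fderiv ℝ hf x (grd g x)) ^ 2 / (1 + H ^ 2) with ha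
      have hFt : HasDerivAt (fun s => (1 + (fderiv ℝ (fun y => U (s, y)) x e) ^ 2) *
          (R ^ 2 - 2 * n * (s - t0) - ‖x - x0‖ ^ 2) ^ 2)
          (2 * H * (A - 2 * H / (1 + H ^ 2) * a) * P ^ 2 + (1 + H ^ 2) * (2 * P * (-2 * n))) t := by
        have h1 := ((((hasDerivAt_id t).sub_const t0).const_mul (2 * (n : ℝ))).const_sub
          (R ^ 2)).sub_const (‖x - x0‖ ^ 2)
        refine (((hut.pow 2).const_add 1).mul (h1.pow 2)).congr_deriv ?_
        simp [hPdef, hHdef, hgdef]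
      have hεd := left_deriv_ge hFt (ε := ε) (by
        filter_upwards [Ioo_mem_nhdsLT ht.1, hφt.filter_mono nhdsWithin_le_nhds] with s hs hs2
        have h1 := hmax s ⟨hs.1.le, hs.2.le.trans ht.2⟩ x hxc
        rw [max_eq_left hs2.le] at h1
        have h2 := mul_le_mul_of_nonneg_right (hle (fun y => U (s, y)) x)
              (sq_nonneg (R ^ 2 - 2 * n * (s - t0) - ‖x - x0‖ ^ 2))
        simp only [← hgdef, ← hHdef, ← hPdef]
        linarith)
      have hfin : 2 * H * (A - 2 * H / (1 + H ^ 2) * a) * P ^ 2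
          + (1 + H ^ 2) * (2 * P * (-2 * n))
          = (2 * H * P ^ 2 * A + P ^ 2 * (2 - 6 * H ^ 2 / (1 + H ^ 2)) * a
            + -4 * (1 + H ^ 2) * P * (n - H ^ 2 / (1 + H ^ 2)))
            - 2 * P ^ 2 * a / (1 + H ^ 2) - 4 * P * H ^ 2 := by
        field_simp
        ring
      have i1 : 0 ≤ 2 * P ^ 2 * a / (1 + H ^ 2) := by positivity
      have i2 : 0 ≤ 4 * P * H ^ 2 := by positivity
      linarith)
  exact key

end Helpers

/-- **Maintaining the graphical representation** (graphical case of Lemma `maintaingraphlem`).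
For every `L₁ ≥ 1` there is `λ₁ ∈ (0,1)` such that: if `u` is a graphical mean curvature
flow on `(s₀−R₁², s₀+λ₁²R₁²) × Bⁿ(0,ρ₁+R₁)` with `|u| < Γ₁+R₁`, and for all
`t ∈ (s₀−R₁²,s₀)` one has `sup |u(t,·)| < Γ₁−R₁` and `sup |Du(t,·)| ≤ L₁`, then for all
`t ∈ (s₀, s₀+λ₁²R₁²)` and `x ∈ Bⁿ(0,ρ₁)`:
`|u(t,x)| ≤ sup_{(s₀−R₁²,s₀)×Bⁿ(0,ρ₁+R₁)} |u| + R₁` and `|Du(t,x)| ≤ 4L₁`. -/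
theorem maintaingraphlem (n : ℕ) (hn : 1 ≤ n) (L₁ : ℝ) (hL : 1 ≤ L₁) :
    ∃ lam₁ ∈ Set.Ioo (0 : ℝ) 1,
      ∀ (ρ₁ R₁ Γ₁ : ℝ), 0 < ρ₁ → 0 < R₁ → 0 < Γ₁ → ∀ (s₀ : ℝ)
        (u : ℝ → EuclideanSpace ℝ (Fin n) → ℝ),
        IsGMCF (Set.Ioo (s₀ - R₁ ^ 2) (s₀ + lam₁ ^ 2 * R₁ ^ 2))
          (Metric.ball 0 (ρ₁ + R₁)) u →
        (∀ t ∈ Set.Ioo (s₀ - R₁ ^ 2) (s₀ + lam₁ ^ 2 * R₁ ^ 2),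
          ∀ x ∈ Metric.ball (0 : EuclideanSpace ℝ (Fin n)) (ρ₁ + R₁), |u t x| < Γ₁ + R₁) →
        (∀ t ∈ Set.Ioo (s₀ - R₁ ^ 2) s₀,
          sSup ((fun x => |u t x|) '' Metric.ball (0 : EuclideanSpace ℝ (Fin n)) (ρ₁ + R₁))
            < Γ₁ - R₁) →
        (∀ t ∈ Set.Ioo (s₀ - R₁ ^ 2) s₀,
          ∀ x ∈ Metric.ball (0 : EuclideanSpace ℝ (Fin n)) (ρ₁ + R₁),
            gradNorm (u t) x ≤ L₁) →
        ∀ t ∈ Set.Ioo s₀ (s₀ + lam₁ ^ 2 * R₁ ^ 2),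
        ∀ x ∈ Metric.ball (0 : EuclideanSpace ℝ (Fin n)) ρ₁,
          |u t x| ≤ sSup ((fun p : ℝ × EuclideanSpace ℝ (Fin n) => |u p.1 p.2|) ''
              (Set.Ioo (s₀ - R₁ ^ 2) s₀ ×ˢ
                Metric.ball (0 : EuclideanSpace ℝ (Fin n)) (ρ₁ + R₁))) + R₁ ∧
          gradNorm (u t) x ≤ 4 * L₁ := by
  have hn1 : (1 : ℝ) ≤ n := by exact_mod_cast hn
  have hlam0 : (0 : ℝ) < 1 / (4 * n) := by positivity
  have hlam1 : 1 / (4 * (n : ℝ)) < 1 := by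
    rw [div_lt_one (by positivity)]; linarith
  have hlam2 : 4 * (n : ℝ) * (1 / (4 * n)) ^ 2 ≤ 1 / 4 := by
    have : 4 * (n : ℝ) * (1 / (4 * n)) ^ 2 = 1 / (4 * n) := by field_simp
    rw [this]
    exact one_div_le_one_div_of_le (by norm_num) (by linarith)
  refine ⟨1 / (4 * n), ⟨hlam0, hlam1⟩, ?_⟩
  generalize 1 / (4 * (n : ℝ)) = lam at hlam0 hlam1 hlam2
  intro ρ R Γ hρ hR hΓ s₀ u hu hbd hsup hgrad t ht x hx
  obtain ⟨husm, hupde⟩ := hu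
  have hR2 : 0 < R ^ 2 := by positivity
  have hlR : 0 < lam ^ 2 * R ^ 2 := by positivity
  have hlR2 : lam ^ 2 * R ^ 2 < R ^ 2 := by
    have : lam ^ 2 < 1 := by nlinarith
    nlinarith
  set t0 := s₀ - lam ^ 2 * R ^ 2 with ht0
  have ht0mem : t0 ∈ Set.Ioo (s₀ - R ^ 2) s₀ := ⟨by linarith, by linarith⟩
  have hIsub : ∀ s ∈ Set.Icc t0 t, s ∈ Set.Ioo (s₀ - R ^ 2) (s₀ + lam ^ 2 * R ^ 2) :=
    fun s hs => ⟨by linarith [hs.1], by linarith [hs.2, ht.2]⟩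
  have hBsub : ∀ y ∈ closedBall x R,
      y ∈ Metric.ball (0 : EuclideanSpace ℝ (Fin n)) (ρ + R) := by
    intro y hy
    rw [mem_ball] at hx ⊢
    rw [mem_closedBall] at hy
    linarith [dist_triangle y x 0]
  set U : ℝ × EuclideanSpace ℝ (Fin n) → ℝ := fun p => u p.1 p.2 with hUdef
  have hopen : IsOpen (Set.Ioo (s₀ - R ^ 2) (s₀ + lam ^ 2 * R ^ 2) ×ˢ
      Metric.ball (0 : EuclideanSpace ℝ (Fin n)) (ρ + R)) := isOpen_Ioo.prod isOpen_ball
  have hU : ∀ s ∈ Set.Icc t0 t, ∀ y ∈ closedBall x R, ContDiffAt ℝ 3 U (s, y) := by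
    intro s hs y hy
    refine ((husm (s, y) ⟨hIsub s hs, hBsub y hy⟩).contDiffAt
      (hopen.mem_nhds ⟨hIsub s hs, hBsub y hy⟩)).of_le ?_
    exact WithTop.coe_le_coe.2 (le_top : (3 : ℕ∞) ≤ ⊤)
  have hpde : ∀ s ∈ Set.Icc t0 t, ∀ y ∈ closedBall x R, ∀ᶠ z in 𝓝 y,
      deriv (fun s => U (s, z)) s = mcfRHS (fun z => U (s, z)) z := by
    intro s hs y hy
    filter_upwards [isOpen_ball.mem_nhds (hBsub y hy)] with z hz
    exact hupde s (hIsub s hs) z hz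
  have ht0t : t0 ≤ t := by linarith [ht.1]
  have htI : t ∈ Set.Icc t0 t := ⟨ht0t, le_rfl⟩
  have hxI : x ∈ closedBall x R := mem_closedBall_self hR.le
  have hdur : ∀ s ∈ Set.Icc t0 t, 2 * (n : ℝ) * (s - t0) ≤ R ^ 2 / 4 := by
    intro s hs
    have h1 : s - t0 ≤ 2 * (lam ^ 2 * R ^ 2) := by linarith [hs.2, ht.2]
    calc 2 * (n : ℝ) * (s - t0) ≤ 2 * (n : ℝ) * (2 * (lam ^ 2 * R ^ 2)) :=
          mul_le_mul_of_nonneg_left h1 (by positivity)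
      _ = (4 * (n : ℝ) * lam ^ 2) * R ^ 2 := by ring
      _ ≤ 1 / 4 * R ^ 2 := mul_le_mul_of_nonneg_right hlam2 hR2.le
      _ = R ^ 2 / 4 := by ring
  constructor
  · set M := sSup ((fun p : ℝ × EuclideanSpace ℝ (Fin n) => |u p.1 p.2|) ''
              (Set.Ioo (s₀ - R ^ 2) s₀ ×ˢ
                Metric.ball (0 : EuclideanSpace ℝ (Fin n)) (ρ + R))) with hM
    have hMle : ∀ y ∈ closedBall x R, |u t0 y| ≤ M := by
      intro y hy
      refine le_csSup ⟨Γ + R, ?_⟩ ⟨(t0, y), ⟨ht0mem, hBsub y hy⟩, rfl⟩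
      rintro _ ⟨⟨s, z⟩, ⟨hs, hz⟩, rfl⟩
      exact (hbd s ⟨hs.1, by linarith [hs.2]⟩ z hz).le
    have hcont : ContinuousOn (fun s => U (s, x)) (Set.Icc t0 t) := fun s hs =>
      (deriv_slice ((hU s hs x hxI).differentiableAt (by decide))).continuousAt.continuousWithinAt
    have hne : ∀ c : ℝ, (∀ y ∈ closedBall x R, R ^ 2 ≤ (U (t0, y) - c) ^ 2) →
        ∀ s ∈ Set.Icc t0 t, U (s, x) ≠ c := by
      intro c hc s hs h
      have := height_est hU hpde hc s hs x hxI
      rw [h] at this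
      simp at this
      linarith [hdur s hs]
    have h0 := abs_le.1 (hMle x hxI)
    rw [abs_le]
    constructor
    · by_contra hcon
      push Not at hcon
      obtain ⟨s, hs, hs2⟩ := intermediate_value_Icc' ht0t hcont
        (show -(M + R) ∈ Set.Icc (U (t, x)) (U (t0, x)) from
          ⟨hcon.le, by simp only [hUdef]; linarith [h0.1]⟩)
      refine hne (-(M + R)) (fun y hy => ?_) s hs hs2
      have := (abs_le.1 (hMle y hy)).1
      exact pow_le_pow_left₀ hR.le (by simp only [hUdef]; linarith) 2
    · by_contra hcon
      push Not at hcon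
      obtain ⟨s, hs, hs2⟩ := intermediate_value_Icc ht0t hcont
        (show M + R ∈ Set.Icc (U (t0, x)) (U (t, x)) from
          ⟨by simp only [hUdef]; linarith [h0.2], hcon.le⟩)
      refine hne (M + R) (fun y hy => ?_) s hs hs2
      have := (abs_le.1 (hMle y hy)).2
      rw [← neg_sq]
      rw [← neg_sq (U (t0, y) - (M + R)), neg_sq R]
      exact pow_le_pow_left₀ hR.le (by simp only [hUdef]; linarith) 2
  · have hinit : ∀ y ∈ closedBall x R, gradNormSq (fun z => U (t0, z)) y ≤ L₁ ^ 2 := by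
      intro y hy
      exact (Real.sqrt_le_iff.1 (hgrad t0 ht0mem y (hBsub y hy))).2
    have := grad_est hn hU hpde hinit t htI x hxI
    have hd := hdur t htI
    have hP : 3 / 4 * R ^ 2 ≤ max (R ^ 2 - 2 * n * (t - t0) - ‖x - x‖ ^ 2) 0 := by
      refine le_max_of_le_left ?_
      simp only [sub_self, norm_zero]
      linarith
    have hP2 := pow_le_pow_left₀ (by positivity) hP 2
    have hq : 0 ≤ gradNormSq (u t) x := by rw [gradNormSq_eq]; positivity
    have h3 : (1 + gradNormSq (u t) x) * (3 / 4 * R ^ 2) ^ 2 ≤ (1 + L₁ ^ 2) * R ^ 4 :=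
      (mul_le_mul_of_nonneg_left hP2 (by linarith)).trans this
    have h4 : (1 + gradNormSq (u t) x) * (9 / 16) ≤ 1 + L₁ ^ 2 := by
      have hR4 : 0 < R ^ 4 := by positivity
      refine le_of_mul_le_mul_right ?_ hR4
      linarith
    unfold gradNorm
    refine Real.sqrt_le_iff.2 ⟨by linarith, ?_⟩
    nlinarith
end
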